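/- Near-diagonal lower bound for the heat kernel (Proposition 4.3): For every real μ ≥ 1 and every r > 0 there exists a constant C > 0 such that for every choice of continuous ν, a : ℝ → ℝ with 1/μ ≤ ν(x) ≤ μ and 1/μ ≤ a(x) ≤ μ for all x, every real W ≥ 0, every corrector T and every fundamental solution P of the canonical equation, one has P(t,x,y) ≥ 1/(C√t) for all t > 0 and all x, y ∈ ℝ satisfying |T(x) − T(y) − W t| ≤ r√t. -/

import Mathlib

open MeasureTheory Filter

/-- Two-sided ellipticity bounds `1/μ ≤ f ≤ μ`. -/
def Elliptic (μ : ℝ) (f : ℝ → ℝ) : Prop := ∀ x : ℝ, 1 / μ ≤ f x ∧ f x ≤ μ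

/-- A classical solution of the canonical equation
`ν(x)∂ₜp − ∂ₓ(ν(x)a(x)∂ₓp) + W∂ₓp = 0` for every time `t ∈ s` and every `x ∈ ℝ`. -/
def IsCanonicalSolOn (ν a : ℝ → ℝ) (W : ℝ) (u : ℝ → ℝ → ℝ) (s : Set ℝ) : Prop :=
  ∃ ut ux q : ℝ → ℝ → ℝ, ∀ t ∈ s, ∀ x : ℝ,
    HasDerivAt (fun τ => u τ x) (ut t x) t ∧
    HasDerivAt (fun ξ => u t ξ) (ux t x) x ∧
    HasDerivAt (fun ξ => ν ξ * a ξ * ux t ξ) (q t x) x ∧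
    ν x * ut t x - q t x + W * ux t x = 0

/-- A corrector: `T(0) = 0`, `−(aνT')' + WT' = Wν` and `1/μ⁵ ≤ T' ≤ μ⁵`. -/
def IsCorrector (μ : ℝ) (ν a : ℝ → ℝ) (W : ℝ) (T : ℝ → ℝ) : Prop :=
  T 0 = 0 ∧ ∃ T' : ℝ → ℝ,
    (∀ x, HasDerivAt T (T' x) x) ∧
    (∀ x, HasDerivAt (fun y => a y * ν y * T' y) (W * T' x - W * ν x) x) ∧
    (∀ x, 1 / μ ^ 5 ≤ T' x ∧ T' x ≤ μ ^ 5)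

/-- An adjoint corrector: `T̃(0) = 0`, `(aνT̃')' + WT̃' = Wν` and `1/μ⁵ ≤ T̃' ≤ μ⁵`. -/
def IsAdjointCorrector (μ : ℝ) (ν a : ℝ → ℝ) (W : ℝ) (T : ℝ → ℝ) : Prop :=
  T 0 = 0 ∧ ∃ T' : ℝ → ℝ,
    (∀ x, HasDerivAt T (T' x) x) ∧
    (∀ x, HasDerivAt (fun y => a y * ν y * T' y) (W * ν x - W * T' x) x) ∧
    (∀ x, 1 / μ ^ 5 ≤ T' x ∧ T' x ≤ μ ^ 5)

/-- A fundamental solution of the canonical equation. -/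
def IsFundSol (ν a : ℝ → ℝ) (W : ℝ) (P : ℝ → ℝ → ℝ → ℝ) : Prop :=
  (∀ y : ℝ, IsCanonicalSolOn ν a W (fun t x => P t x y) (Set.Ioi 0)) ∧
  (∀ y : ℝ, ∀ t : ℝ, 0 < t → ∀ x : ℝ, 0 ≤ P t x y) ∧
  (∀ y : ℝ, ∀ t : ℝ, 0 < t → ∫ x : ℝ, ν x * P t x y = 1) ∧
  (∀ y : ℝ, ∀ φ : ℝ → ℝ, Continuous φ → (∃ B : ℝ, ∀ x, |φ x| ≤ B) →
    Tendsto (fun t => ∫ x : ℝ, ν x * P t x y * φ x)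
      (nhdsWithin 0 (Set.Ioi 0)) (nhds (φ y))) ∧
  (∀ s t : ℝ, 0 < s → 0 < t → ∀ x y : ℝ,
    P (t + s) x y = ∫ z : ℝ, ν z * P t x z * P s z y)


open Set Topology MeasureTheory Filter

theorem ev_left_of_deriv_neg {k : ℝ → ℝ} {k' z : ℝ} (h : HasDerivAt k k' z) (hk : k' < 0) :
    ∀ᶠ y in 𝓝[<] z, k z < k y := by
  have h1 := hasDerivAt_iff_tendsto_slope.1 h
  have h2 : ∀ᶠ y in 𝓝[≠] z, slope k z y < 0 := h1.eventually (gt_mem_nhds hk)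
  have h3 : ∀ᶠ y in 𝓝[<] z, slope k z y < 0 :=
    h2.filter_mono (nhdsWithin_mono z (fun y hy => ne_of_lt hy))
  filter_upwards [h3, self_mem_nhdsWithin] with y hy hyz
  have hyz' : y < z := hyz
  rw [slope_def_field, div_neg_iff] at hy
  rcases hy with ⟨h, _⟩ | ⟨_, h⟩
  · linarith
  · linarith

theorem ev_left_of_deriv_pos {k : ℝ → ℝ} {k' z : ℝ} (h : HasDerivAt k k' z) (hk : 0 < k') :
    ∀ᶠ y in 𝓝[<] z, k y < k z := by
  have := ev_left_of_deriv_neg h.neg (by linarith)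
  filter_upwards [this] with y hy
  simpa using hy

theorem ev_right_of_deriv_neg {k : ℝ → ℝ} {k' z : ℝ} (h : HasDerivAt k k' z) (hk : k' < 0) :
    ∀ᶠ y in 𝓝[>] z, k y < k z := by
  have h1 := hasDerivAt_iff_tendsto_slope.1 h
  have h2 : ∀ᶠ y in 𝓝[≠] z, slope k z y < 0 := h1.eventually (gt_mem_nhds hk)
  have h3 : ∀ᶠ y in 𝓝[>] z, slope k z y < 0 :=
    h2.filter_mono (nhdsWithin_mono z (fun y hy => ne_of_gt hy))
  filter_upwards [h3, self_mem_nhdsWithin] with y hy hyz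
  have hyz' : z < y := hyz
  rw [slope_def_field, div_neg_iff] at hy
  rcases hy with ⟨h, _⟩ | ⟨_, h⟩
  · linarith
  · linarith

theorem ev_right_of_deriv_pos {k : ℝ → ℝ} {k' z : ℝ} (h : HasDerivAt k k' z) (hk : 0 < k') :
    ∀ᶠ y in 𝓝[>] z, k z < k y := by
  have := ev_right_of_deriv_neg h.neg (by linarith)
  filter_upwards [this] with y hy
  simpa using hy

theorem deriv_nonneg_of_ev_right {k : ℝ → ℝ} {k' z : ℝ} (h : HasDerivAt k k' z)
    (hk : ∃ᶠ y in 𝓝[>] z, k z ≤ k y) : 0 ≤ k' := by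
  by_contra hc
  push Not at hc
  obtain ⟨y, hy, hy'⟩ := (hk.and_eventually (ev_right_of_deriv_neg h hc)).exists
  linarith

/-- Elliptic crossing lemma. -/
theorem elliptic_cross_aux {A w g : ℝ → ℝ} {W p q η : ℝ} (hA : Continuous A)
    (hA0 : ∀ x, 0 < A x) (hw : Continuous w) (hg : Continuous g) (hW : 0 ≤ W) (hpq : p < q)
    (touch : ∀ z ∈ Ioo p q, ∃ f f' : ℝ → ℝ, ∃ c : ℝ, (∀ᶠ y in 𝓝 z, w y ≤ f y) ∧ f z = w z ∧
      (∀ y, HasDerivAt f (f' y) y) ∧ HasDerivAt (fun y => A y * f' y) c z ∧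
      c - W * f' z ≤ g z)
    {γ β : ℝ → ℝ} {γ' β' : ℝ} (hγ : HasDerivAt γ γ' p) (hγp : γ p = w p)
    (hγf : ∃ᶠ y in 𝓝[>] p, w y ≤ γ y)
    (hβ : HasDerivAt β β' q) (hβq : β q = w q) (hβf : ∃ᶠ y in 𝓝[<] q, w y ≤ β y) (hη : 0 < η) :
    A q * β' ≤ W * w q + (A p * γ' - W * w p + η) + ∫ z in p..q, (g z + η) := by
  set c0 := A p * γ' - W * w p + η with hc0
  have hgη : Continuous fun z => g z + η := by fun_prop
  have hI : ∀ y, HasDerivAt (fun y => ∫ z in p..y, (g z + η)) (g y + η) y := fun y =>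
    (hgη.integral_hasStrictDerivAt p y).hasDerivAt
  have hIc : Continuous (fun y => ∫ z in p..y, (g z + η)) :=
    continuous_iff_continuousAt.2 fun y => (hI y).continuousAt
  set F : ℝ → ℝ := fun y => W * w y + c0 + ∫ z in p..y, (g z + η) with hF
  have hFc : Continuous F := by fun_prop
  have hFA : Continuous fun y => F y / A y := hFc.div hA (fun x => (hA0 x).ne')
  set ω : ℝ → ℝ := fun y => ∫ z in p..y, F z / A z with hω
  have hωd : ∀ y, HasDerivAt ω (F y / A y) y := fun y =>
    (hFA.integral_hasStrictDerivAt p y).hasDerivAt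
  have hωc : Continuous ω := continuous_iff_continuousAt.2 fun y => (hωd y).continuousAt
  have noloc : ∀ z ∈ Ioo p q, ¬ IsLocalMin (fun y => w y - ω y) z := by
    intro z hz hmin
    obtain ⟨f, f', c, hwf, hfz, hfd, hc, hcg⟩ := touch z hz
    have hmin2 : IsLocalMin (fun y => f y - ω y) z := by
      filter_upwards [hmin, hwf] with y h1 h2
      rw [hfz]; linarith
    have h0 := hmin2.hasDerivAt_eq_zero ((hfd z).sub (hωd z))
    set k : ℝ → ℝ := fun y => A y * f' y - W * f y - c0 - ∫ z in p..y, (g z + η) with hk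
    have hkd : HasDerivAt k (c - W * f' z - (g z + η)) z := by
      have := ((hc.sub ((hfd z).const_mul W)).sub_const c0).sub (hI z)
      exact this
    have hkz : k z = 0 := by
      have h1 : A z * f' z = F z := by
        have : f' z = F z / A z := by linarith
        rw [this]; field_simp [(hA0 z).ne']
      simp only [hk, h1, hF, hfz]; ring
    have hkpos := ev_left_of_deriv_neg hkd (by linarith)
    have hall : ∀ᶠ y in 𝓝[<] z, k z < k y ∧ w y ≤ f y ∧ f z - ω z ≤ f y - ω y :=
      hkpos.and ((hwf.filter_mono nhdsWithin_le_nhds).and (hmin2.filter_mono nhdsWithin_le_nhds))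
    obtain ⟨l, hl, hlz⟩ := (mem_nhdsLT_iff_exists_Ioo_subset).1 hall
    have hl' : l < z := hl
    set y0 := (l + z) / 2 with hy0
    have hsm : StrictMonoOn (fun y => f y - ω y) (Icc y0 z) := by
      apply strictMonoOn_of_deriv_pos (convex_Icc _ _)
      · exact fun y _ => ((hfd y).sub (hωd y)).continuousAt.continuousWithinAt
      · intro y hy
        rw [interior_Icc] at hy
        have hyl : y ∈ Ioo l z := ⟨by have := hy.1; rw [hy0] at this; linarith, hy.2⟩
        obtain ⟨h1, h2, _⟩ := hlz hyl
        have hdd : HasDerivAt (fun y => f y - ω y) (f' y - F y / A y) y := (hfd y).sub (hωd y)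
        rw [hdd.deriv]
        have h3 : f' y - F y / A y = (k y + W * (f y - w y)) / A y := by
          simp only [hk, hF]; field_simp [(hA0 y).ne']; ring
        rw [h3]
        apply div_pos _ (hA0 y)
        have : 0 ≤ W * (f y - w y) := mul_nonneg hW (by linarith)
        linarith
    have hlt := hsm (left_mem_Icc.2 (by rw [hy0]; linarith)) (right_mem_Icc.2 (by rw [hy0]; linarith))
      (by rw [hy0]; linarith : y0 < z)
    have := (hlz (show y0 ∈ Ioo l z from ⟨by rw [hy0]; linarith, by rw [hy0]; linarith⟩)).2.2
    simp only at hlt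
    linarith
  obtain ⟨z, hz, hzmin⟩ := isCompact_Icc.exists_isMinOn (nonempty_Icc.2 hpq.le)
    (hw.sub hωc).continuousOn
  have hωp : ω p = 0 := by simp [hω]
  have hFp : F p = W * w p + c0 := by simp [hF]
  have hzq : z = q := by
    by_contra hne
    have hzq : z < q := lt_of_le_of_ne hz.2 hne
    rcases eq_or_lt_of_le hz.1 with h | h
    · subst h
      have hd : HasDerivAt (fun y => γ y - ω y) (γ' - F p / A p) p := hγ.sub (hωd p)
      have hneg : γ' - F p / A p < 0 := by
        rw [hFp, hc0]
        have : γ' - (W * w p + (A p * γ' - W * w p + η)) / A p = - η / A p := by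
          field_simp [(hA0 p).ne']; ring
        rw [this]
        exact div_neg_of_neg_of_pos (by linarith) (hA0 p)
      have hev := ev_right_of_deriv_neg hd hneg
      have hmem : ∀ᶠ y in 𝓝[>] p, y ∈ Ioo p q := Ioo_mem_nhdsGT hpq
      obtain ⟨y, hy, hy1, hy2⟩ := (hγf.and_eventually (hev.and hmem)).exists
      have := hzmin (Ioo_subset_Icc_self hy2)
      simp only [Pi.sub_apply, mem_ofPred_eq] at this
      linarith
    · exact noloc z ⟨h, hzq⟩ (hzmin.isLocalMin (Icc_mem_nhds h hzq))
  subst hzq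
  have hle : β' ≤ F z / A z := by
    by_contra hc
    push Not at hc
    have hd : HasDerivAt (fun y => β y - ω y) (β' - F z / A z) z := hβ.sub (hωd z)
    have hev := ev_left_of_deriv_pos hd (by linarith)
    have hmem : ∀ᶠ y in 𝓝[<] z, y ∈ Ioo p z := Ioo_mem_nhdsLT hpq
    obtain ⟨y, hy, hy1, hy2⟩ := (hβf.and_eventually (hev.and hmem)).exists
    have := hzmin (Ioo_subset_Icc_self hy2)
    simp only [Pi.sub_apply, mem_ofPred_eq] at this
    linarith
  rw [le_div_iff₀ (hA0 z)] at hle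
  simp only [hF] at hle
  linarith

theorem elliptic_cross {A w g : ℝ → ℝ} {W p q : ℝ} (hA : Continuous A)
    (hA0 : ∀ x, 0 < A x) (hw : Continuous w) (hg : Continuous g) (hW : 0 ≤ W) (hpq : p < q)
    (touch : ∀ z ∈ Ioo p q, ∃ f f' : ℝ → ℝ, ∃ c : ℝ, (∀ᶠ y in 𝓝 z, w y ≤ f y) ∧ f z = w z ∧
      (∀ y, HasDerivAt f (f' y) y) ∧ HasDerivAt (fun y => A y * f' y) c z ∧
      c - W * f' z ≤ g z)
    {γ β : ℝ → ℝ} {γ' β' : ℝ} (hγ : HasDerivAt γ γ' p) (hγp : γ p = w p)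
    (hγf : ∃ᶠ y in 𝓝[>] p, w y ≤ γ y)
    (hβ : HasDerivAt β β' q) (hβq : β q = w q) (hβf : ∃ᶠ y in 𝓝[<] q, w y ≤ β y) :
    A q * β' - W * w q - (A p * γ' - W * w p) ≤ ∫ z in p..q, g z := by
  apply le_of_forall_pos_le_add
  intro ε hε
  have hpos : 0 < 1 + (q - p) := by linarith
  have h := elliptic_cross_aux hA hA0 hw hg hW hpq touch hγ hγp hγf hβ hβq hβf
    (η := ε / (1 + (q - p))) (div_pos hε hpos)
  rw [intervalIntegral.integral_add (hg.intervalIntegrable _ _) (by simp),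
    intervalIntegral.integral_const] at h
  have : ε / (1 + (q - p)) + (q - p) • (ε / (1 + (q - p))) = ε := by
    rw [smul_eq_mul]; field_simp
  linarith

open Set Topology MeasureTheory Filter

/-- Inf-convolution in time. -/
theorem infconv_exists {U : ℝ → ℝ → ℝ} (hU : Continuous (fun z : ℝ × ℝ => U z.1 z.2)) {k : ℝ}
    (hk : ∀ s x, |U s x| ≤ k) {τ0 τ1 τ2 τ3 κ δ : ℝ} (h01 : τ0 < τ1) (h12 : τ1 ≤ τ2)
    (h23 : τ2 < τ3) (hδ : 0 < δ) (huc : ∀ s t x, |s - t| < δ → |U s x - U t x| < κ) :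
    ∃ (n : ℝ) (V : ℝ → ℝ → ℝ), 0 < n ∧ Continuous (fun z : ℝ × ℝ => V z.1 z.2) ∧
      (∀ t ∈ Icc τ1 τ2, ∀ x, U t x - κ ≤ V t x ∧ V t x ≤ U t x) ∧
      (∀ t ∈ Icc τ1 τ2, ∀ x, ∃ s ∈ Ioo τ0 τ3, V t x = U s x + n * (t - s) ^ 2 ∧
        (∀ t' y, V t' y ≤ U s y + n * (t' - s) ^ 2) ∧
        (∀ s' ∈ Icc τ0 τ3, U s x + n * (t - s) ^ 2 ≤ U s' x + n * (t - s') ^ 2)) := by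
  set d := min δ (min (τ1 - τ0) (τ3 - τ2)) with hd
  have hd0 : 0 < d := by
    rw [hd]; exact lt_min hδ (lt_min (by linarith) (by linarith))
  have hk0 : 0 ≤ k := (abs_nonneg _).trans (hk 0 0)
  set n := (2 * k + 1) / d ^ 2 with hn
  have hn0 : 0 < n := by positivity
  have hnd : n * d ^ 2 = 2 * k + 1 := by rw [hn]; field_simp
  set f : ℝ × ℝ → ℝ → ℝ := fun z s => U s z.2 + n * (z.1 - s) ^ 2 with hf
  have hfc : Continuous ↿f := by
    have : Continuous fun w : (ℝ × ℝ) × ℝ => U w.2 w.1.2 :=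
      hU.comp (by fun_prop : Continuous fun w : (ℝ × ℝ) × ℝ => (w.2, w.1.2))
    have h2 : Continuous fun w : (ℝ × ℝ) × ℝ => U w.2 w.1.2 + n * (w.1.1 - w.2) ^ 2 := by
      fun_prop
    exact h2
  set V : ℝ → ℝ → ℝ := fun t x => sInf (f (t, x) '' Icc τ0 τ3) with hV
  have hVc : Continuous (fun z : ℝ × ℝ => V z.1 z.2) := isCompact_Icc.continuous_sInf hfc
  have hfc' : ∀ z, Continuous (f z) := fun z =>
    hfc.comp (by fun_prop : Continuous fun s : ℝ => (z, s))
  have hne : (Icc τ0 τ3).Nonempty := nonempty_Icc.2 (by linarith)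
  have hle : ∀ t x, ∀ s ∈ Icc τ0 τ3, V t x ≤ U s x + n * (t - s) ^ 2 := by
    intro t x s hs
    exact csInf_le (isCompact_Icc.image (hfc' (t, x))).bddBelow (mem_image_of_mem _ hs)
  have hmin : ∀ t ∈ Icc τ1 τ2, ∀ x, ∃ s ∈ Icc τ0 τ3, V t x = U s x + n * (t - s) ^ 2 ∧
      |t - s| < d := by
    intro t ht x
    obtain ⟨s, hs, hs'⟩ := isCompact_Icc.exists_sInf_image_eq hne (hfc' (t, x)).continuousOn
    have hVs : V t x = U s x + n * (t - s) ^ 2 := hs'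
    refine ⟨s, hs, hVs, ?_⟩
    have h1 := hle t x t ⟨by linarith [ht.1], by linarith [ht.2]⟩
    have h2 := abs_le.1 (hk t x)
    have h3 := abs_le.1 (hk s x)
    have h4 : n * (t - s) ^ 2 < n * d ^ 2 := by
      rw [hnd]; have : n * (t - t) ^ 2 = 0 := by ring
      linarith [h2.2, h3.1]
    have h5 : (t - s) ^ 2 < d ^ 2 := lt_of_mul_lt_mul_left h4 hn0.le
    exact abs_lt_of_sq_lt_sq h5 hd0.le
  refine ⟨n, V, hn0, hVc, ?_, ?_⟩
  · intro t ht x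
    have h1 := hle t x t ⟨by linarith [ht.1], by linarith [ht.2]⟩
    have : n * (t - t) ^ 2 = 0 := by ring
    refine ⟨?_, by linarith⟩
    obtain ⟨s, hs, hVs, hsd⟩ := hmin t ht x
    have h2 := huc s t x (by rw [abs_sub_comm]; exact hsd.trans_le (min_le_left _ _))
    have h3 := (abs_lt.1 h2).1
    have : 0 ≤ n * (t - s) ^ 2 := by positivity
    linarith
  · intro t ht x
    obtain ⟨s, hs, hVs, hsd⟩ := hmin t ht x
    have hd1 : d ≤ τ1 - τ0 := (min_le_right _ _).trans (min_le_left _ _)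
    have hd2 : d ≤ τ3 - τ2 := (min_le_right _ _).trans (min_le_right _ _)
    have := abs_lt.1 hsd
    refine ⟨s, ⟨by linarith [ht.1], by linarith [ht.2]⟩, hVs, fun t' y => hle t' y s hs, ?_⟩
    intro s' hs'
    rw [← hVs]; exact hle t x s' hs'

/-- The primitive of the weight. -/
noncomputable def prim (ν : ℝ → ℝ) (x : ℝ) : ℝ := ∫ z in (0 : ℝ)..x, ν z

theorem prim_hasDerivAt {ν : ℝ → ℝ} (hν : Continuous ν) (x : ℝ) :
    HasDerivAt (prim ν) (ν x) x := (hν.integral_hasStrictDerivAt 0 x).hasDerivAt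

theorem prim_continuous {ν : ℝ → ℝ} (hν : Continuous ν) : Continuous (prim ν) :=
  continuous_iff_continuousAt.2 fun y => (prim_hasDerivAt hν y).continuousAt

theorem prim_sub {ν : ℝ → ℝ} (hν : Continuous ν) (p q : ℝ) :
    prim ν q - prim ν p = ∫ z in p..q, ν z := by
  unfold prim
  rw [sub_eq_iff_eq_add, add_comm, intervalIntegral.integral_add_adjacent_intervals]
    <;> exact hν.intervalIntegrable _ _

theorem prim_strictMono {ν : ℝ → ℝ} (hν : Continuous ν) (h0 : ∀ x, 0 < ν x) :
    StrictMono (prim ν) := by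
  apply strictMono_of_deriv_pos
  intro x; rw [(prim_hasDerivAt hν x).deriv]; exact h0 x

/-- Mass of a solution on an interval. -/
noncomputable def mass (ν : ℝ → ℝ) (u : ℝ → ℝ → ℝ) (t p q : ℝ) : ℝ := ∫ z in p..q, ν z * u t z

/-- One-sided strict monotonicity from a derivative sign. -/
theorem lt_of_deriv_pos_left {H H' : ℝ → ℝ} {l q : ℝ} (hlq : l < q)
    (hd : ∀ y, HasDerivAt H (H' y) y) (hpos : ∀ y ∈ Ioo l q, 0 < H' y) : H l < H q := by
  have hsm : StrictMonoOn H (Icc l q) := by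
    apply strictMonoOn_of_deriv_pos (convex_Icc _ _)
    · exact fun y _ => (hd y).continuousAt.continuousWithinAt
    · intro y hy
      rw [interior_Icc] at hy
      rw [(hd y).deriv]; exact hpos y hy
  exact hsm (left_mem_Icc.2 hlq.le) (right_mem_Icc.2 hlq.le) hlq

theorem freq_le_left {H v : ℝ → ℝ} {c : ℝ → ℝ} {q l : ℝ} (hl : l < q) (hc : ∀ y, 0 < c y)
    (hd : ∀ y, HasDerivAt H (c y * v y) y) (hmin : ∀ y ∈ Icc l q, H q ≤ H y) :
    ∃ᶠ y in 𝓝[<] q, v y ≤ 0 := by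
  by_contra hcon
  rw [not_frequently] at hcon
  obtain ⟨m, hm, hm'⟩ := (mem_nhdsLT_iff_exists_Ioo_subset).1 hcon
  have hm0 : m < q := hm
  have hml : max m l < q := max_lt hm0 hl
  have := lt_of_deriv_pos_left hml hd (fun y hy => by
    have h1 : y ∈ Ioo m q := ⟨(le_max_left _ _).trans_lt hy.1, hy.2⟩
    have h2 : ¬ v y ≤ 0 := hm' h1
    push Not at h2
    exact mul_pos (hc y) h2)
  have h3 := hmin (max m l) ⟨le_max_right _ _, hml.le⟩
  linarith

theorem freq_le_right {H v : ℝ → ℝ} {c : ℝ → ℝ} {p l : ℝ} (hl : p < l) (hc : ∀ y, 0 < c y)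
    (hd : ∀ y, HasDerivAt H (-(c y * v y)) y) (hmin : ∀ y ∈ Icc p l, H p ≤ H y) :
    ∃ᶠ y in 𝓝[>] p, v y ≤ 0 := by
  by_contra hcon
  rw [not_frequently] at hcon
  obtain ⟨m, hm, hm'⟩ := (mem_nhdsGT_iff_exists_Ioo_subset).1 hcon
  have hm0 : p < m := hm
  have hml : p < min m l := lt_min hm0 hl
  have := lt_of_deriv_pos_left (H := fun y => - H y) hml
    (fun y => (hd y).neg) (fun y hy => by
    have h1 : y ∈ Ioo p m := ⟨hy.1, hy.2.trans_le (min_le_left _ _)⟩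
    have h2 : ¬ v y ≤ 0 := hm' h1
    push Not at h2
    simpa using mul_pos (hc y) h2)
  have h3 := hmin (min m l) ⟨hml.le, min_le_right _ _⟩
  linarith

/-- The comparison principle for interval masses. -/
theorem comparison {ν a : ℝ → ℝ} {W : ℝ} {u : ℝ → ℝ → ℝ} (hν : Continuous ν) (ha : Continuous a)
    (hν0 : ∀ x, 0 < ν x) (ha0 : ∀ x, 0 < a x) (hW : 0 ≤ W)
    (sol : IsCanonicalSolOn ν a W u (Ioi 0)) {τ0 τ1 τ2 τ3 a0 b0 : ℝ} (h0 : 0 < τ0)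
    (h01 : τ0 < τ1) (h12 : τ1 ≤ τ2) (h23 : τ2 < τ3) (hab : a0 < b0)
    (hu : ContinuousOn (fun z : ℝ × ℝ => u z.1 z.2) (Icc τ0 τ3 ×ˢ Icc a0 b0))
    {B Bt B1 B2 B11 B22 : ℝ → ℝ → ℝ → ℝ}
    (hBc : Continuous fun z : ℝ × ℝ × ℝ => B z.1 z.2.1 z.2.2)
    (hBt : ∀ t z1 z2, HasDerivAt (fun t => B t z1 z2) (Bt t z1 z2) t)
    (hB1 : ∀ t z1 z2, HasDerivAt (fun z => B t z z2) (B1 t z1 z2) z1)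
    (hB2 : ∀ t z1 z2, HasDerivAt (fun z => B t z1 z) (B2 t z1 z2) z2)
    (hB11 : ∀ t z1 z2, HasDerivAt (fun z => B1 t z z2) (B11 t z1 z2) z1)
    (hB22 : ∀ t z1 z2, HasDerivAt (fun z => B2 t z1 z) (B22 t z1 z2) z2)
    (hstart : ∀ p q, a0 ≤ p → p ≤ q → q ≤ b0 → B τ1 (prim ν p) (prim ν q) ≤ mass ν u τ1 p q)
    (hdiag : ∀ t ∈ Icc τ1 τ2, ∀ p ∈ Icc a0 b0, B t (prim ν p) (prim ν p) ≤ 0)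
    (hleft : ∀ t ∈ Icc τ1 τ2, ∀ q ∈ Icc a0 b0,
      B t (prim ν a0) (prim ν q) ≤ mass ν u t a0 q ∨
      ∀ s ∈ Icc τ0 τ3, -B1 t (prim ν a0) (prim ν q) < u s a0)
    (hright : ∀ t ∈ Icc τ1 τ2, ∀ p ∈ Icc a0 b0,
      B t (prim ν p) (prim ν b0) ≤ mass ν u t p b0 ∨
      ∀ s ∈ Icc τ0 τ3, B2 t (prim ν p) (prim ν b0) < u s b0)
    (hstrict : ∀ t ∈ Icc τ1 τ2, ∀ p q, a0 < p → p < q → q < b0 →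
      mass ν u t p q < B t (prim ν p) (prim ν q) →
      Bt t (prim ν p) (prim ν q) < ν q ^ 2 * a q * B22 t (prim ν p) (prim ν q) +
        ν p ^ 2 * a p * B11 t (prim ν p) (prim ν q) -
        W * (B1 t (prim ν p) (prim ν q) + B2 t (prim ν p) (prim ν q))) :
    ∀ t ∈ Icc τ1 τ2, ∀ p q, a0 ≤ p → p ≤ q → q ≤ b0 →
      B t (prim ν p) (prim ν q) ≤ mass ν u t p q := by
  intro ts hts ps qs hps hpqs hqs
  by_contra hcon
  push Not at hcon
  set κ' := (B ts (prim ν ps) (prim ν qs) - mass ν u ts ps qs) / 3 with hκ'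
  have hκ0 : 0 < κ' := by rw [hκ']; linarith
  have hN := prim_continuous hν
  have hNd := prim_hasDerivAt hν
  have hNm := prim_strictMono hν hν0
  have hM : 0 < prim ν b0 - prim ν a0 := sub_pos.2 (hNm hab)
  set κ := κ' / (prim ν b0 - prim ν a0) with hκ
  have hκpos : 0 < κ := div_pos hκ0 hM
  -- clamped function
  set cl : ℝ × ℝ → ℝ × ℝ := fun z => (max τ0 (min z.1 τ3), max a0 (min z.2 b0)) with hcl
  have hclc : Continuous cl := by fun_prop
  have hclm : ∀ z, cl z ∈ Icc τ0 τ3 ×ˢ Icc a0 b0 := fun z =>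
    ⟨⟨le_max_left _ _, max_le (by linarith) (min_le_right _ _)⟩,
     ⟨le_max_left _ _, max_le (by linarith) (min_le_right _ _)⟩⟩
  set U : ℝ → ℝ → ℝ := fun t x => u (cl (t, x)).1 (cl (t, x)).2 with hUdef
  have hUc : Continuous (fun z : ℝ × ℝ => U z.1 z.2) := by
    have := hu.comp_continuous hclc hclm
    exact this
  have hUu : ∀ t ∈ Icc τ0 τ3, ∀ x ∈ Icc a0 b0, U t x = u t x := by
    intro t ht x hx
    simp only [hUdef, hcl]
    rw [min_eq_left ht.2, max_eq_right ht.1, min_eq_left hx.2, max_eq_right hx.1]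
  have hcomp : IsCompact (Icc τ0 τ3 ×ˢ Icc a0 b0) := isCompact_Icc.prod isCompact_Icc
  obtain ⟨k, hk⟩ := hcomp.exists_bound_of_continuousOn hu
  have hkU : ∀ s x, |U s x| ≤ k := fun s x => hk _ (hclm (s, x))
  have huc := hcomp.uniformContinuousOn_of_continuous hu
  rw [Metric.uniformContinuousOn_iff] at huc
  obtain ⟨δ, hδ, hδu⟩ := huc κ hκpos
  have hucU : ∀ s t x, |s - t| < δ → |U s x - U t x| < κ := by
    intro s t x hst
    refine hδu _ (hclm (s, x)) _ (hclm (t, x)) ?_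
    simp only [hcl]
    rw [Prod.dist_eq]
    simp only [dist_self]
    refine max_lt ?_ hδ
    rw [Real.dist_eq]
    refine lt_of_le_of_lt ?_ hst
    refine (abs_max_sub_max_le_max _ _ _ _).trans ?_
    simp only [sub_self, abs_zero]
    refine max_le (abs_nonneg _) ?_
    refine (abs_min_sub_min_le_max _ _ _ _).trans ?_
    simp
  obtain ⟨n, V, hn, hVc, hVU, hVs⟩ := infconv_exists hUc hkU h01 h12 h23 hδ hucU
  have hVt : ∀ t, Continuous (V t) := fun t =>
    hVc.comp (by fun_prop : Continuous fun x : ℝ => (t, x))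
  have hνV : ∀ t, Continuous fun z => ν z * V t z := fun t => hν.mul (hVt t)
  have hUt : ∀ t, Continuous (U t) := fun t =>
    hUc.comp (by fun_prop : Continuous fun x : ℝ => (t, x))
  have hmassU : ∀ t ∈ Icc τ1 τ2, ∀ p q, a0 ≤ p → p ≤ q → q ≤ b0 →
      mass ν u t p q = ∫ z in p..q, ν z * U t z := by
    intro t ht p q hp hpq hq
    apply intervalIntegral.integral_congr
    intro z hz
    rw [uIcc_of_le hpq] at hz
    simp only
    rw [hUu t ⟨by linarith [ht.1], by linarith [ht.2]⟩ z ⟨by linarith [hz.1], by linarith [hz.2]⟩]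
  have hDle : ∀ t ∈ Icc τ1 τ2, ∀ p q, a0 ≤ p → p ≤ q → q ≤ b0 →
      mass ν V t p q ≤ mass ν u t p q ∧ mass ν u t p q - κ' ≤ mass ν V t p q := by
    intro t ht p q hp hpq hq
    rw [hmassU t ht p q hp hpq hq]
    have hνU : Continuous fun z => ν z * U t z := hν.mul (hUt t)
    constructor
    · apply intervalIntegral.integral_mono_on hpq ((hνV t).intervalIntegrable _ _)
        (hνU.intervalIntegrable _ _)
      intro z _
      exact mul_le_mul_of_nonneg_left (hVU t ht z).2 (hν0 z).le
    · have h1 : ∫ z in p..q, (ν z * U t z - κ * ν z) ≤ mass ν V t p q := by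
        apply intervalIntegral.integral_mono_on hpq
          (Continuous.intervalIntegrable (by fun_prop) _ _) ((hνV t).intervalIntegrable _ _)
        intro z _
        have := mul_le_mul_of_nonneg_left (hVU t ht z).1 (hν0 z).le
        linarith
      rw [intervalIntegral.integral_sub (hνU.intervalIntegrable _ _)
        (Continuous.intervalIntegrable (by fun_prop) _ _),
        intervalIntegral.integral_const_mul, ← prim_sub hν] at h1
      have h2 : κ * (prim ν q - prim ν p) ≤ κ' := by
        have h3 : prim ν q - prim ν p ≤ prim ν b0 - prim ν a0 := by
          have := hNm.monotone hp; have := hNm.monotone hq; linarith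
        calc _ ≤ κ * (prim ν b0 - prim ν a0) := mul_le_mul_of_nonneg_left h3 hκpos.le
          _ = κ' := by rw [hκ]; field_simp
      linarith
  set Φ : ℝ × ℝ × ℝ → ℝ := fun z =>
    mass ν V z.1 z.2.1 z.2.2 - B z.1 (prim ν z.2.1) (prim ν z.2.2) with hΦ
  have hGc : Continuous fun z : ℝ × ℝ => ∫ x in (0:ℝ)..z.2, ν x * V z.1 x := by
    apply intervalIntegral.continuous_parametric_intervalIntegral_of_continuous
      (f := fun (z : ℝ × ℝ) x => ν x * V z.1 x) (s := fun z => z.2)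
    · have : Continuous fun w : (ℝ × ℝ) × ℝ => V w.1.1 w.2 :=
        hVc.comp (by fun_prop : Continuous fun w : (ℝ × ℝ) × ℝ => (w.1.1, w.2))
      exact (hν.comp continuous_snd).mul this
    · fun_prop
  have hmV : ∀ t p q, mass ν V t p q =
      (∫ x in (0:ℝ)..q, ν x * V t x) - ∫ x in (0:ℝ)..p, ν x * V t x := by
    intro t p q
    rw [intervalIntegral.integral_interval_sub_left ((hνV t).intervalIntegrable _ _)
      ((hνV t).intervalIntegrable _ _)]; rfl
  have hΦc : Continuous Φ := by
    have h1 : Continuous fun z : ℝ × ℝ × ℝ => mass ν V z.1 z.2.1 z.2.2 := by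
      simp only [hmV]
      exact (hGc.comp (by fun_prop : Continuous fun z : ℝ × ℝ × ℝ => (z.1, z.2.2))).sub
        (hGc.comp (by fun_prop : Continuous fun z : ℝ × ℝ × ℝ => (z.1, z.2.1)))
    have h2 : Continuous fun z : ℝ × ℝ × ℝ => B z.1 (prim ν z.2.1) (prim ν z.2.2) :=
      hBc.comp (by fun_prop : Continuous fun z : ℝ × ℝ × ℝ =>
        (z.1, prim ν z.2.1, prim ν z.2.2))
    exact h1.sub h2
  set K : Set (ℝ × ℝ × ℝ) := (Icc τ1 ts ×ˢ Icc a0 b0 ×ˢ Icc a0 b0) ∩ {z | z.2.1 ≤ z.2.2} with hK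
  have hKc : IsCompact K := by
    apply IsCompact.inter_right (isCompact_Icc.prod (isCompact_Icc.prod isCompact_Icc))
    exact isClosed_le (by fun_prop) (by fun_prop)
  have hsK : (ts, ps, qs) ∈ K :=
    ⟨⟨⟨hts.1, le_rfl⟩, ⟨hps, by linarith⟩, ⟨by linarith, hqs⟩⟩, hpqs⟩
  obtain ⟨⟨t, p, q⟩, ⟨⟨ht, hp, hq⟩, hpq⟩, hmin⟩ := hKc.exists_isMinOn ⟨_, hsK⟩ hΦc.continuousOn
  simp only at ht hp hq
  have hpq' : p ≤ q := hpq
  have ht' : t ∈ Icc τ1 τ2 := ⟨ht.1, ht.2.trans hts.2⟩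
  have hminv : ∀ t' p' q', t' ∈ Icc τ1 ts → a0 ≤ p' → p' ≤ q' → q' ≤ b0 →
      Φ (t, p, q) ≤ Φ (t', p', q') := by
    intro t' p' q' h1 h2 h3 h4
    exact hmin ⟨⟨h1, ⟨h2, by linarith⟩, ⟨by linarith, h4⟩⟩, h3⟩
  have hΦs : Φ (t, p, q) ≤ -3 * κ' := by
    have h1 := hminv ts ps qs ⟨hts.1, le_rfl⟩ hps hpqs hqs
    have h2 := (hDle ts hts ps qs hps hpqs hqs).1
    simp only [hΦ] at h1 ⊢
    have : 3 * κ' = B ts (prim ν ps) (prim ν qs) - mass ν u ts ps qs := by rw [hκ']; ring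
    linarith
  have hDlt : mass ν u t p q < B t (prim ν p) (prim ν q) := by
    have := (hDle t ht' p q hp.1 hpq' hq.2).2
    simp only [hΦ] at hΦs
    linarith
  have htτ : τ1 < t := by
    rcases eq_or_lt_of_le ht.1 with h | h
    · subst h
      have := hstart p q hp.1 hpq' hq.2
      linarith
    · exact h
  have hpq2 : p < q := by
    rcases eq_or_lt_of_le hpq' with h | h
    · subst h
      have := hdiag t ht' p hp
      have h2 : mass ν u t p p = 0 := by simp [mass]
      linarith
    · exact h
  -- derivatives of Φ in p and q
  have hdq : ∀ y, HasDerivAt (fun y => Φ (t, p, y))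
      (ν y * (V t y - B2 t (prim ν p) (prim ν y))) y := by
    intro y
    have h1 : HasDerivAt (fun y => mass ν V t p y) (ν y * V t y) y :=
      ((hνV t).integral_hasStrictDerivAt p y).hasDerivAt
    have h2 : HasDerivAt (fun y => B t (prim ν p) (prim ν y))
        (B2 t (prim ν p) (prim ν y) * ν y) y := (hB2 t _ (prim ν y)).comp y (hNd y)
    have h3 : HasDerivAt (fun y => Φ (t, p, y))
      (ν y * V t y - B2 t (prim ν p) (prim ν y) * ν y) y := h1.sub h2
    convert h3 using 1; ring
  have hdp : ∀ y, HasDerivAt (fun y => Φ (t, y, q))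
      (-(ν y * (V t y + B1 t (prim ν y) (prim ν q)))) y := by
    intro y
    have h1 : HasDerivAt (fun y => mass ν V t y q) (-(ν y * V t y)) y := by
      have h4 : HasDerivAt (fun y => - mass ν V t q y) (-(ν y * V t y)) y :=
        (((hνV t).integral_hasStrictDerivAt q y).hasDerivAt).neg
      refine h4.congr_of_eventuallyEq (Eventually.of_forall fun z => ?_)
      simp only [mass]
      rw [intervalIntegral.integral_symm]
    have h2 : HasDerivAt (fun y => B t (prim ν y) (prim ν q))
        (B1 t (prim ν y) (prim ν q) * ν y) y :=
      HasDerivAt.comp y (hB1 t (prim ν y) (prim ν q)) (hNd y)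
    have h3 : HasDerivAt (fun y => Φ (t, y, q))
      (-(ν y * V t y) - B1 t (prim ν y) (prim ν q) * ν y) y := h1.sub h2
    convert h3 using 1; ring
  have hpa : a0 < p := by
    rcases eq_or_lt_of_le hp.1 with h | h
    · exfalso
      rcases hleft t ht' q hq with h1 | h1
      · rw [h] at h1; linarith
      · obtain ⟨s, hs, hVeq, _, _⟩ := hVs t ht' p
        have hs' : s ∈ Icc τ0 τ3 := Ioo_subset_Icc_self hs
        have h2 := h1 s hs'
        rw [h] at h2
        rw [hUu s hs' p hp] at hVeq
        have h3 : 0 ≤ n * (t - s) ^ 2 := by positivity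
        have h4 : 0 < ν p * (V t p + B1 t (prim ν p) (prim ν q)) :=
          mul_pos (hν0 p) (by linarith)
        have h5 := ev_right_of_deriv_neg (hdp p) (by linarith)
        obtain ⟨y, hy, hy2⟩ := (h5.and (Ioo_mem_nhdsGT hpq2)).exists
        have := hminv t y q ⟨ht.1, ht.2⟩ (by linarith [hy2.1]) hy2.2.le hq.2
        linarith
    · exact h
  have hqb : q < b0 := by
    rcases eq_or_lt_of_le hq.2 with h | h
    · exfalso
      rcases hright t ht' p hp with h1 | h1
      · rw [← h] at h1; linarith
      · obtain ⟨s, hs, hVeq, _, _⟩ := hVs t ht' q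
        have hs' : s ∈ Icc τ0 τ3 := Ioo_subset_Icc_self hs
        have h2 := h1 s hs'
        rw [← h] at h2
        rw [hUu s hs' q hq] at hVeq
        have h3 : 0 ≤ n * (t - s) ^ 2 := by positivity
        have h4 : 0 < ν q * (V t q - B2 t (prim ν p) (prim ν q)) :=
          mul_pos (hν0 q) (by linarith)
        have h5 := ev_left_of_deriv_pos (hdq q) h4
        obtain ⟨y, hy, hy2⟩ := (h5.and (Ioo_mem_nhdsLT hpq2)).exists
        have := hminv t p y ⟨ht.1, ht.2⟩ hp.1 hy2.1.le (by linarith [hy2.2])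
        linarith
    · exact h
  -- first order conditions
  have hVq : V t q = B2 t (prim ν p) (prim ν q) := by
    have hloc : IsLocalMin (fun y => Φ (t, p, y)) q := by
      filter_upwards [Icc_mem_nhds hpq2 hqb] with y hy
      exact hminv t p y ht hp.1 hy.1 hy.2
    have := hloc.hasDerivAt_eq_zero (hdq q)
    rcases mul_eq_zero.1 this with h | h
    · exact absurd h (hν0 q).ne'
    · linarith
  have hVp : V t p = - B1 t (prim ν p) (prim ν q) := by
    have hloc : IsLocalMin (fun y => Φ (t, y, q)) p := by
      filter_upwards [Icc_mem_nhds hpa hpq2] with y hy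
      exact hminv t y q ht hy.1 hy.2 hq.2
    have := hloc.hasDerivAt_eq_zero (hdp p)
    rcases mul_eq_zero.1 (neg_eq_zero.1 this) with h | h
    · exact absurd h (hν0 p).ne'
    · linarith
  have hfq : ∃ᶠ y in 𝓝[<] q, V t y - B2 t (prim ν p) (prim ν y) ≤ 0 :=
    freq_le_left hpq2 hν0 hdq (fun y hy => hminv t p y ht hp.1 hy.1 (hy.2.trans hq.2))
  have hfp : ∃ᶠ y in 𝓝[>] p, V t y + B1 t (prim ν y) (prim ν q) ≤ 0 :=
    freq_le_right hpq2 hν0 hdp (fun y hy => hminv t y q ht (hp.1.trans hy.1) hy.2 hq.2)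
  obtain ⟨ut, ux, fl, hsol⟩ := sol
  set F := ν q ^ 2 * a q * B22 t (prim ν p) (prim ν q) +
        ν p ^ 2 * a p * B11 t (prim ν p) (prim ν q) -
        W * (B1 t (prim ν p) (prim ν q) + B2 t (prim ν p) (prim ν q)) with hF
  have key : ∀ h, 0 < h → h < t - τ1 → F ≤
      (B t (prim ν p) (prim ν q) - B (t - h) (prim ν p) (prim ν q)) / h
        + n * h * (prim ν q - prim ν p) := by
    intro h hh hht
    set g : ℝ → ℝ := fun y => ν y * ((V t y - V (t - h) y) / h + n * h) with hg
    have hVtc := hVt t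
    have hVtc' := hVt (t - h)
    have hgc : Continuous g := by fun_prop
    have hE := elliptic_cross (A := fun y => ν y * a y) (w := V t) (g := g) (W := W)
      (hν.mul ha) (fun y => mul_pos (hν0 y) (ha0 y)) (hVt t) hgc hW hpq2
      (γ := fun y => - B1 t (prim ν y) (prim ν q)) (β := fun y => B2 t (prim ν p) (prim ν y))
      (γ' := -(B11 t (prim ν p) (prim ν q) * ν p)) (β' := B22 t (prim ν p) (prim ν q) * ν q)
      ?_ ?_ hVp.symm (hfp.mono fun y hy => by linarith) ?_ hVq.symm
      (hfq.mono fun y hy => by linarith)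
    · have hI : ∫ z in p..q, g z = (mass ν V t p q - mass ν V (t - h) p q) / h
          + n * h * (prim ν q - prim ν p) := by
        have : g = fun z => h⁻¹ * (ν z * V t z - ν z * V (t - h) z) + (n * h) * ν z := by
          funext z; simp only [hg]; field_simp
        rw [this, intervalIntegral.integral_add (Continuous.intervalIntegrable (by fun_prop) _ _)
          (Continuous.intervalIntegrable (by fun_prop) _ _),
          intervalIntegral.integral_const_mul, intervalIntegral.integral_const_mul,
          intervalIntegral.integral_sub ((hνV t).intervalIntegrable _ _)
          ((hνV (t - h)).intervalIntegrable _ _), prim_sub hν]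
        simp only [mass]; ring
      rw [hI] at hE
      have h1 := hminv (t - h) p q ⟨by linarith, by linarith [ht.2]⟩ hp.1 hpq2.le hq.2
      simp only [hΦ] at h1
      have h2 : (mass ν V t p q - mass ν V (t - h) p q) / h ≤
          (B t (prim ν p) (prim ν q) - B (t - h) (prim ν p) (prim ν q)) / h := by
        apply div_le_div_of_nonneg_right _ hh.le
        linarith
      have h3 : F = ν q * a q * (B22 t (prim ν p) (prim ν q) * ν q) - W * V t q -
          (ν p * a p * (-(B11 t (prim ν p) (prim ν q) * ν p)) - W * V t p) := by
        rw [hVq, hVp, hF]; ring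
      rw [h3]; linarith
    · intro z hz
      obtain ⟨s, hs, hVeq, hVle, hsmin⟩ := hVs t ht' z
      have hs0 : s ∈ Ioi (0:ℝ) := by have := hs.1; simp only [mem_Ioi]; linarith
      have hs' : s ∈ Icc τ0 τ3 := Ioo_subset_Icc_self hs
      have hz' : z ∈ Icc a0 b0 := ⟨by linarith [hz.1], by linarith [hz.2]⟩
      refine ⟨fun y => u s y + n * (t - s) ^ 2, fun y => ux s y, fl s z, ?_, ?_, ?_, ?_, ?_⟩
      · have : Ioo p q ∈ 𝓝 z := Ioo_mem_nhds hz.1 hz.2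
        filter_upwards [this] with y hy
        have := hVle t y
        rwa [hUu s hs' y ⟨by linarith [hy.1], by linarith [hy.2]⟩] at this
      · rw [hVeq, hUu s hs' z hz']
      · intro y; exact ((hsol s hs0 y).2.1).add_const _
      · exact (hsol s hs0 z).2.2.1
      · have hloc : IsLocalMin (fun s' => u s' z + n * (t - s') ^ 2) s := by
          filter_upwards [Ioo_mem_nhds hs.1 hs.2] with s' hs2
          have h1 := hsmin s' (Ioo_subset_Icc_self hs2)
          rwa [hUu s hs' z hz', hUu s' (Ioo_subset_Icc_self hs2) z hz'] at h1
        have hd : HasDerivAt (fun s' => u s' z + n * (t - s') ^ 2)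
            (ut s z + n * (2 * (t - s) * (-1))) s := by
          refine ((hsol s hs0 z).1).add ?_
          have := (((hasDerivAt_id s).const_sub t).pow 2).const_mul n
          refine this.congr_deriv ?_
          simp
        have h0 := hloc.hasDerivAt_eq_zero hd
        have heq := (hsol s hs0 z).2.2.2
        have h2 := hVle (t - h) z
        have h3 : ut s z ≤ (V t z - V (t - h) z) / h + n * h := by
          have : (ut s z - n * h) ≤ (V t z - V (t - h) z) / h := by
            rw [le_div_iff₀ hh, hVeq]
            have h4 : ut s z = 2 * n * (t - s) := by linarith
            rw [h4]; nlinarith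
          linarith
        have h4 := mul_le_mul_of_nonneg_left h3 (hν0 z).le
        simp only [hg]
        linarith
    · have := (HasDerivAt.comp p (hB11 t (prim ν p) (prim ν q)) (hNd p)).neg
      exact this
    · exact (hB22 t (prim ν p) (prim ν q)).comp q (hNd q)
  have hlim : Tendsto (fun h => (B t (prim ν p) (prim ν q) - B (t - h) (prim ν p) (prim ν q)) / h
        + n * h * (prim ν q - prim ν p)) (𝓝[>] 0) (𝓝 (Bt t (prim ν p) (prim ν q) + 0)) := by
    apply Tendsto.add
    · have hd : HasDerivAt (fun h => - B (t - h) (prim ν p) (prim ν q))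
          (Bt t (prim ν p) (prim ν q)) 0 := by
        have h1 : HasDerivAt (fun h : ℝ => t - h) (-1) 0 := by
          simpa using (hasDerivAt_id (0:ℝ)).const_sub t
        have h2 := hBt (t - 0) (prim ν p) (prim ν q)
        have h3 := (HasDerivAt.comp (0:ℝ) h2 h1).neg
        simp only [mul_neg, mul_one, neg_neg, sub_zero] at h3
        exact h3
      have h4 := hd.tendsto_slope_zero_right
      refine h4.congr' ?_
      filter_upwards with h
      simp only [zero_add, sub_zero, smul_eq_mul]
      rw [div_eq_inv_mul]; ring
    · have : Tendsto (fun h : ℝ => n * h * (prim ν q - prim ν p)) (𝓝 0)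
          (𝓝 (n * 0 * (prim ν q - prim ν p))) := Continuous.tendsto (by fun_prop) 0
      simp only [mul_zero, zero_mul] at this
      exact this.mono_left nhdsWithin_le_nhds
  rw [add_zero] at hlim
  have hfin : F ≤ Bt t (prim ν p) (prim ν q) := by
    apply ge_of_tendsto hlim
    have : Ioo 0 (t - τ1) ∈ 𝓝[>] (0:ℝ) := Ioo_mem_nhdsGT (by linarith)
    filter_upwards [this] with h hh
    exact key h hh.1 hh.2
  have := hstrict t ht' p q hpa hpq2 hqb hDlt
  linarith

open Set Topology MeasureTheory Filter

theorem hasDerivAt_quad {f : ℝ → ℝ} (α β γ : ℝ) {f' z : ℝ}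
    (hf : ∀ z, f z = α + β * z + γ * z ^ 2) (h : f' = β + 2 * γ * z) : HasDerivAt f f' z := by
  have h1 : HasDerivAt (fun z : ℝ => α + β * z + γ * z ^ 2) (β * 1 + γ * (2 * z)) z := by
    have h2 : HasDerivAt (fun z : ℝ => z ^ 2) (2 * z) z := by
      simpa using hasDerivAt_pow 2 z
    exact (((hasDerivAt_id z).const_mul β).const_add α).add (h2.const_mul γ)
  have h3 : f = fun z : ℝ => α + β * z + γ * z ^ 2 := funext hf
  rw [h3]
  exact h1.congr_deriv (by rw [h]; ring)

set_option maxHeartbeats 1600000 in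
/-- Interior lower estimate from mass bounds. -/
theorem interior_est {ν a : ℝ → ℝ} {W lam : ℝ} (hν : Continuous ν) (ha : Continuous a)
    (hν0 : ∀ x, 0 < ν x) (ha0 : ∀ x, 0 < a x) (hW : 0 ≤ W) (hlam : 0 < lam)
    (hAl : ∀ x, lam ≤ ν x ^ 2 * a x) {a0 b0 ℓ θ : ℝ} (hab : a0 < b0) (hℓ : 0 < ℓ) (hθ : 0 < θ) :
    ∃ C1 : ℝ, 0 < C1 ∧ ∀ d : ℝ → ℝ → ℝ, IsCanonicalSolOn ν a W d (Ioi 0) →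
      ∀ τ0 τ1 t0 τ3 : ℝ, 0 < τ0 → τ0 < τ1 → τ1 + θ ≤ t0 → t0 < τ3 →
      ContinuousOn (fun z : ℝ × ℝ => d z.1 z.2) (Icc τ0 τ3 ×ˢ Icc a0 b0) →
      ∀ η : ℝ, 0 < η →
      (∀ t ∈ Icc τ1 t0, ∀ p q, a0 ≤ p → p ≤ q → q ≤ b0 → -η ≤ mass ν d t p q) →
      ∀ x0 : ℝ, prim ν a0 + ℓ ≤ prim ν x0 → prim ν x0 + ℓ ≤ prim ν b0 →
        -(C1 * η) ≤ d t0 x0 := by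
  have hNm := prim_strictMono hν hν0
  have hNd := prim_hasDerivAt hν
  set L := prim ν b0 - prim ν a0 with hL
  have hL0 : 0 < L := sub_pos.2 (hNm hab)
  set C2 := 1 / ℓ ^ 2 with hC2
  set C3 := 1 / θ with hC3
  have hC20 : 0 < C2 := by positivity
  have hC30 : 0 < C3 := by positivity
  set κ := 1 / (2 * L) with hκ
  have hκ0 : 0 < κ := by positivity
  set C1 := (C2 + (C3 + 4 * W * C2 * L + 1) / (4 * lam)) / κ with hC1
  have hC10 : 0 < C1 := by positivity
  have hκC : κ * C1 = C2 + (C3 + 4 * W * C2 * L + 1) / (4 * lam) := by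
    rw [hC1]; field_simp
  have hlamC : 4 * lam * (κ * C1 - C2) = C3 + 4 * W * C2 * L + 1 := by
    rw [hκC]; field_simp; ring
  have hκCC : 0 < κ * C1 - C2 := by rw [hκC]; have : 0 < (C3 + 4 * W * C2 * L + 1) / (4 * lam) := by positivity
                                    linarith
  refine ⟨C1, hC10, ?_⟩
  intro d sol τ0 τ1 t0 τ3 h0 h01 h1t ht3 hcont η hη hmass x0 hxa hxb
  set z0 := prim ν x0 with hz0
  set B : ℝ → ℝ → ℝ → ℝ := fun t z1 z2 => -(η * (C1 * ((z2 - z1) - κ * (z2 - z1) ^ 2) +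
    C2 * ((z1 - z0) ^ 2 + (z2 - z0) ^ 2) + C3 * (t0 - t))) with hB
  have hxa' : a0 < x0 := hNm.lt_iff_lt.1 (by linarith)
  have hxb' : x0 < b0 := hNm.lt_iff_lt.1 (by linarith)
  have hmem : ∀ p, a0 ≤ p → p ≤ b0 → prim ν a0 ≤ prim ν p ∧ prim ν p ≤ prim ν b0 :=
    fun p h1 h2 => ⟨hNm.monotone h1, hNm.monotone h2⟩
  have hψ : ∀ S, 0 ≤ S → S ≤ L → 0 ≤ S - κ * S ^ 2 := by
    intro S h1 h2
    have : κ * S ≤ 1 := by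
      rw [hκ, div_mul_eq_mul_div, div_le_one (by positivity)]; linarith
    nlinarith
  have hC2ℓ : C2 * ℓ ^ 2 = 1 := by rw [hC2]; field_simp
  have hC3θ : C3 * θ = 1 := by rw [hC3]; field_simp
  -- the three terms are nonnegative; if one of the last two is at least one then B ≤ -η
  have hBle : ∀ t p q, a0 ≤ p → p ≤ q → q ≤ b0 → t ≤ t0 →
      1 ≤ C2 * ((prim ν p - z0) ^ 2 + (prim ν q - z0) ^ 2) + C3 * (t0 - t) →
      B t (prim ν p) (prim ν q) ≤ -η := by
    intro t p q hp hpq hq ht h1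
    have h2 := hψ (prim ν q - prim ν p) (by linarith [hNm.monotone hpq])
      (by linarith [hNm.monotone hp, hNm.monotone hq])
    have h3 : 0 ≤ C1 * ((prim ν q - prim ν p) - κ * (prim ν q - prim ν p) ^ 2) :=
      mul_nonneg hC10.le h2
    simp only [hB]
    nlinarith
  have hcomp := comparison (u := d) hν ha hν0 ha0 hW sol h0 h01 (by linarith : τ1 ≤ t0) ht3 hab hcont
    (B := B) (Bt := fun _ _ _ => η * C3)
    (B1 := fun _ z1 z2 => -(η * (C1 * (-1 + 2 * κ * (z2 - z1)) + 2 * C2 * (z1 - z0))))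
    (B2 := fun _ z1 z2 => -(η * (C1 * (1 - 2 * κ * (z2 - z1)) + 2 * C2 * (z2 - z0))))
    (B11 := fun _ _ _ => η * (2 * κ * C1 - 2 * C2))
    (B22 := fun _ _ _ => η * (2 * κ * C1 - 2 * C2))
    (by simp only [hB]; fun_prop)
    (fun t z1 z2 => hasDerivAt_quad (-(η * (C1 * ((z2 - z1) - κ * (z2 - z1) ^ 2) +
      C2 * ((z1 - z0) ^ 2 + (z2 - z0) ^ 2) + C3 * t0))) (η * C3) 0
      (fun t => by simp only [hB]; ring) (by ring))
    (fun t z1 z2 => hasDerivAt_quad (-(η * (C1 * (z2 - κ * z2 ^ 2) +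
      C2 * (z0 ^ 2 + (z2 - z0) ^ 2) + C3 * (t0 - t))))
      (-(η * (C1 * (-1 + 2 * κ * z2) - 2 * C2 * z0))) (-(η * (-(C1 * κ) + C2)))
      (fun t => by simp only [hB]; ring) (by ring))
    (fun t z1 z2 => hasDerivAt_quad (-(η * (C1 * (-z1 - κ * z1 ^ 2) +
      C2 * (z0 ^ 2 + (z1 - z0) ^ 2) + C3 * (t0 - t))))
      (-(η * (C1 * (1 + 2 * κ * z1) - 2 * C2 * z0))) (-(η * (-(C1 * κ) + C2)))
      (fun t => by simp only [hB]; ring) (by ring))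
    (fun t z1 z2 => hasDerivAt_quad (-(η * (C1 * (-1 + 2 * κ * z2) - 2 * C2 * z0)))
      (η * (2 * κ * C1 - 2 * C2)) 0 (fun t => by ring) (by ring))
    (fun t z1 z2 => hasDerivAt_quad (-(η * (C1 * (1 + 2 * κ * z1) - 2 * C2 * z0)))
      (η * (2 * κ * C1 - 2 * C2)) 0 (fun t => by ring) (by ring))
    ?_ ?_ ?_ ?_ ?_
  · have hf : HasDerivAt (fun q => mass ν d t0 x0 q - B t0 (prim ν x0) (prim ν q))
        (ν x0 * d t0 x0 + η * C1 * ν x0) x0 := by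
      obtain ⟨ut, ux, fl, hsol⟩ := sol
      have hdc : Continuous (d t0) := continuous_iff_continuousAt.2 fun x =>
        ((hsol t0 (by simp only [mem_Ioi]; linarith) x).2.1).continuousAt
      have h1 : HasDerivAt (fun y => mass ν d t0 x0 y) (ν x0 * d t0 x0) x0 :=
        ((hν.mul hdc).integral_hasStrictDerivAt x0 x0).hasDerivAt
      have h2 : HasDerivAt (fun z => B t0 (prim ν x0) z) (-(η * C1)) (prim ν x0) :=
        hasDerivAt_quad (-(η * (C1 * (-z0 - κ * z0 ^ 2) +
          C2 * z0 ^ 2 )))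
          (-(η * (C1 * (1 + 2 * κ * z0) - 2 * C2 * z0))) (-(η * (-(C1 * κ) + C2)))
          (fun t => by simp only [hB]; ring) (by ring)
      have h3 := h1.sub (h2.comp x0 (hNd x0))
      exact h3.congr_deriv (by ring)
    have hnn : 0 ≤ ν x0 * d t0 x0 + η * C1 * ν x0 := by
      apply deriv_nonneg_of_ev_right hf
      apply Eventually.frequently
      filter_upwards [Ioo_mem_nhdsGT hxb'] with y hy
      have h1 := hcomp t0 ⟨by linarith, le_rfl⟩ x0 y hxa'.le hy.1.le hy.2.le
      have h2 : mass ν d t0 x0 x0 - B t0 (prim ν x0) (prim ν x0) = 0 := by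
        simp [mass, hB, hz0]
      rw [h2]; linarith
    have h4 : 0 ≤ ν x0 * (d t0 x0 + C1 * η) := by linarith
    have := nonneg_of_mul_nonneg_right h4 (hν0 x0)
    linarith
  · intro p q hp hpq hq
    refine (hBle τ1 p q hp hpq hq (by linarith) ?_).trans (hmass τ1 ⟨le_rfl, by linarith⟩ p q hp hpq hq)
    have h1 : 0 ≤ C2 * ((prim ν p - z0) ^ 2 + (prim ν q - z0) ^ 2) := by positivity
    have h2 : C3 * θ ≤ C3 * (t0 - τ1) := mul_le_mul_of_nonneg_left (by linarith) hC30.le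
    linarith
  · intro t ht p hp
    simp only [hB]
    have : 0 ≤ C3 * (t0 - t) := mul_nonneg hC30.le (by linarith [ht.2])
    have h1 : 0 ≤ C2 * ((prim ν p - z0) ^ 2 + (prim ν p - z0) ^ 2) := by positivity
    have h2 : 0 ≤ η * (C1 * ((prim ν p - prim ν p) - κ * (prim ν p - prim ν p) ^ 2) +
      C2 * ((prim ν p - z0) ^ 2 + (prim ν p - z0) ^ 2) + C3 * (t0 - t)) := by
      apply mul_nonneg hη.le
      simp only [sub_self]; nlinarith
    linarith
  · intro t ht q hq
    left
    refine (hBle t a0 q le_rfl hq.1 hq.2 ht.2 ?_).trans (hmass t ht a0 q le_rfl hq.1 hq.2)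
    have h2 : 0 ≤ C3 * (t0 - t) := mul_nonneg hC30.le (by linarith [ht.2])
    have h1 : ℓ ^ 2 ≤ (prim ν a0 - z0) ^ 2 + (prim ν q - z0) ^ 2 := by
      nlinarith [sq_nonneg (prim ν q - z0)]
    have := mul_le_mul_of_nonneg_left h1 hC20.le
    linarith
  · intro t ht p hp
    left
    refine (hBle t p b0 hp.1 hp.2 le_rfl ht.2 ?_).trans (hmass t ht p b0 hp.1 hp.2 le_rfl)
    have h2 : 0 ≤ C3 * (t0 - t) := mul_nonneg hC30.le (by linarith [ht.2])
    have h1 : ℓ ^ 2 ≤ (prim ν p - z0) ^ 2 + (prim ν b0 - z0) ^ 2 := by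
      nlinarith [sq_nonneg (prim ν p - z0)]
    have := mul_le_mul_of_nonneg_left h1 hC20.le
    linarith
  · intro t ht p q hp hpq hq _
    have hp' := hmem p hp.le (by linarith)
    have hq' := hmem q (by linarith) hq.le
    have e1 : lam * (2 * (κ * C1 - C2)) ≤ ν q ^ 2 * a q * (2 * (κ * C1 - C2)) :=
      mul_le_mul_of_nonneg_right (hAl q) (by linarith)
    have e2 : lam * (2 * (κ * C1 - C2)) ≤ ν p ^ 2 * a p * (2 * (κ * C1 - C2)) :=
      mul_le_mul_of_nonneg_right (hAl p) (by linarith)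
    have e3 : -(2 * L) ≤ prim ν p - z0 + (prim ν q - z0) := by linarith
    have e4 : (2 * W * C2) * (-(2 * L)) ≤ (2 * W * C2) * (prim ν p - z0 + (prim ν q - z0)) :=
      mul_le_mul_of_nonneg_left e3 (by positivity)
    have e5 : C3 < ν q ^ 2 * a q * (2 * (κ * C1 - C2)) + ν p ^ 2 * a p * (2 * (κ * C1 - C2)) +
      (2 * W * C2) * (prim ν p - z0 + (prim ν q - z0)) := by linarith
    have e6 := mul_lt_mul_of_pos_left e5 hη
    refine e6.trans_eq ?_
    ring

theorem sol_neg {ν a : ℝ → ℝ} {W : ℝ} {u : ℝ → ℝ → ℝ} (h : IsCanonicalSolOn ν a W u (Ioi 0)) :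
    IsCanonicalSolOn ν a W (fun t x => - u t x) (Ioi 0) := by
  obtain ⟨ut, ux, fl, hs⟩ := h
  refine ⟨fun t x => - ut t x, fun t x => - ux t x, fun t x => - fl t x, fun t ht x => ?_⟩
  obtain ⟨h1, h2, h3, h4⟩ := hs t ht x
  refine ⟨h1.neg, h2.neg, ?_, by linarith⟩
  have := h3.neg
  refine this.congr_of_eventuallyEq (Eventually.of_forall fun z => ?_)
  simp

theorem sol_shift_sub {ν a : ℝ → ℝ} {W k : ℝ} {u : ℝ → ℝ → ℝ} (hk : 0 ≤ k)
    (h : IsCanonicalSolOn ν a W u (Ioi 0)) :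
    IsCanonicalSolOn ν a W (fun t x => u (t + k) x - u t x) (Ioi 0) := by
  obtain ⟨ut, ux, fl, hs⟩ := h
  refine ⟨fun t x => ut (t + k) x - ut t x, fun t x => ux (t + k) x - ux t x,
    fun t x => fl (t + k) x - fl t x, fun t ht x => ?_⟩
  obtain ⟨h1, h2, h3, h4⟩ := hs t ht x
  have ht' : t + k ∈ Ioi (0 : ℝ) := by simp only [mem_Ioi] at ht ⊢; linarith
  obtain ⟨g1, g2, g3, g4⟩ := hs (t + k) ht' x
  refine ⟨?_, g2.sub h2, ?_, by linarith⟩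
  · have := HasDerivAt.comp_add_const t k g1
    exact this.sub h1
  · have := g3.sub h3
    refine this.congr_of_eventuallyEq (Eventually.of_forall fun z => ?_)
    simp only [Pi.sub_apply]; ring

/-- Scheffe's lemma in the form needed here, uniform on compact time intervals. -/
theorem scheffe_unif {f : ℝ → ℝ → ℝ} (hf0 : ∀ t, 0 < t → ∀ x, 0 ≤ f t x)
    (hfi : ∀ t, 0 < t → Integrable (f t)) (hf1 : ∀ t, 0 < t → ∫ x, f t x = 1)
    (hft : ∀ t, 0 < t → ∀ x, ContinuousAt (fun s => f s x) t) {α β : ℝ} (hα : 0 < α) :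
    ∀ η > 0, ∃ δ > 0, ∀ s ∈ Icc α β, ∀ t ∈ Icc α β, |s - t| < δ →
      ∫ x, |f s x - f t x| < η := by
  have key : ∀ t, 0 < t → Tendsto (fun s => ∫ x, |f s x - f t x|) (𝓝 t) (𝓝 0) := by
    intro t ht
    have h1 : ∀ᶠ s in 𝓝 t, ∫ x, |f s x - f t x| = 2 * ∫ x, max (f t x - f s x) 0 := by
      filter_upwards [lt_mem_nhds ht] with s hs
      have hd : Integrable (fun x => f s x - f t x) := (hfi s hs).sub (hfi t ht)
      have hd' : Integrable (fun x => f t x - f s x) := (hfi t ht).sub (hfi s hs)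
      have hm : Integrable fun x => max (f t x - f s x) 0 := hd'.pos_part
      have : (fun x => |f s x - f t x|) =
          fun x => (f s x - f t x) + 2 * max (f t x - f s x) 0 := by
        funext x
        rcases le_total (f t x) (f s x) with h | h
        · rw [abs_of_nonneg (by linarith), max_eq_right (by linarith)]; ring
        · rw [abs_of_nonpos (by linarith), max_eq_left (by linarith)]; ring
      rw [this, integral_add hd (hm.const_mul 2), integral_const_mul,
        integral_sub (hfi s hs) (hfi t ht), hf1 s hs, hf1 t ht]
      ring
    have h2 : Tendsto (fun s => ∫ x, max (f t x - f s x) 0) (𝓝 t) (𝓝 (∫ x : ℝ, (0:ℝ))) := by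
      apply tendsto_integral_filter_of_dominated_convergence (f t)
      · filter_upwards [lt_mem_nhds ht] with s hs
        exact ((hfi t ht).sub (hfi s hs)).pos_part.aestronglyMeasurable
      · filter_upwards [lt_mem_nhds ht] with s hs
        refine Eventually.of_forall fun x => ?_
        rw [Real.norm_eq_abs, abs_of_nonneg (le_max_right _ _)]
        exact max_le (by linarith [hf0 s hs x]) (hf0 t ht x)
      · exact hfi t ht
      · refine Eventually.of_forall fun x => ?_
        have := ((tendsto_const_nhds (x := f t x)).sub (hft t ht x)).max
          (tendsto_const_nhds (x := (0:ℝ)))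
        simpa using this
    have h3 := (h2.const_mul 2)
    simp only [integral_zero, mul_zero] at h3
    exact h3.congr' (h1.mono fun s hs => hs.symm)
  intro η hη
  have hex : ∀ t : ℝ, ∃ r > 0, 0 < t → ∀ s, |s - t| < r → 0 < s → ∫ x, |f s x - f t x| < η / 2 := by
    intro t
    by_cases ht : 0 < t
    · have := (key t ht).eventually (gt_mem_nhds (half_pos hη))
      obtain ⟨r, hr, h⟩ := Metric.eventually_nhds_iff.1 this
      exact ⟨r, hr, fun _ s hs _ => h hs⟩
    · exact ⟨1, one_pos, fun h => absurd h ht⟩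
  choose r hr hr' using hex
  obtain ⟨δ, hδ, hδ'⟩ := lebesgue_number_lemma_of_metric (isCompact_Icc (a := α) (b := β))
    (c := fun i : Ioi (0:ℝ) => Metric.ball (i : ℝ) (r i)) (fun i => Metric.isOpen_ball)
    (fun t ht => mem_iUnion.2 ⟨⟨t, hα.trans_le ht.1⟩, Metric.mem_ball_self (hr _)⟩)
  refine ⟨δ, hδ, fun s hs t ht hst => ?_⟩
  obtain ⟨⟨i, hi⟩, hi'⟩ := hδ' t ht
  have hi0 : 0 < i := hi
  have hs0 : 0 < s := hα.trans_le hs.1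
  have ht0 : 0 < t := hα.trans_le ht.1
  have h1 := hr' i hi s (hi' (by rw [Metric.mem_ball, Real.dist_eq]; exact hst)) hs0
  have h2 := hr' i hi t (hi' (Metric.mem_ball_self hδ)) ht0
  have g1 : Integrable (fun x => |f s x - f t x|) := ((hfi s hs0).sub (hfi t ht0)).abs
  have g2 : Integrable (fun x => |f s x - f i x|) := ((hfi s hs0).sub (hfi i hi0)).abs
  have g3 : Integrable (fun x => |f t x - f i x|) := ((hfi t ht0).sub (hfi i hi0)).abs
  have hle : ∫ x, |f s x - f t x| ≤ ∫ x, (|f s x - f i x| + |f t x - f i x|) := by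
    apply integral_mono g1 (g2.add g3)
    intro x
    have := abs_sub_le (f s x) (f i x) (f t x)
    rw [abs_sub_comm (f i x) (f t x)] at this
    exact this
  rw [integral_add g2 g3] at hle
  linarith

open Set Topology MeasureTheory Filter

/-- Equicontinuity in time of the interval masses. -/
def MassCont (ν : ℝ → ℝ) (u : ℝ → ℝ → ℝ) : Prop :=
  ∀ α β : ℝ, 0 < α → ∀ η > 0, ∃ δ > 0, ∀ s ∈ Icc α β, ∀ t ∈ Icc α β, |s - t| < δ →
    ∀ p q, p ≤ q → |mass ν u s p q - mass ν u t p q| ≤ η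

theorem mass_neg (ν : ℝ → ℝ) (u : ℝ → ℝ → ℝ) (t p q : ℝ) :
    mass ν (fun t x => - u t x) t p q = - mass ν u t p q := by
  simp only [mass, mul_neg, intervalIntegral.integral_neg]

theorem MassCont.neg {ν : ℝ → ℝ} {u : ℝ → ℝ → ℝ} (h : MassCont ν u) :
    MassCont ν (fun t x => - u t x) := by
  intro α β hα η hη
  obtain ⟨δ, hδ, h'⟩ := h α β hα η hη
  refine ⟨δ, hδ, fun s hs t ht hst p q hpq => ?_⟩
  rw [mass_neg, mass_neg, ← abs_neg]
  convert h' s hs t ht hst p q hpq using 2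
  ring

theorem sol_contx {ν a : ℝ → ℝ} {W : ℝ} {u : ℝ → ℝ → ℝ} (sol : IsCanonicalSolOn ν a W u (Ioi 0))
    {t : ℝ} (ht : 0 < t) : Continuous (u t) := by
  obtain ⟨ut, ux, fl, hsol⟩ := sol
  exact continuous_iff_continuousAt.2 fun x => ((hsol t ht x).2.1).continuousAt

theorem sol_contt {ν a : ℝ → ℝ} {W : ℝ} {u : ℝ → ℝ → ℝ} (sol : IsCanonicalSolOn ν a W u (Ioi 0))
    {t : ℝ} (ht : 0 < t) (x : ℝ) : ContinuousAt (fun s => u s x) t := by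
  obtain ⟨ut, ux, fl, hsol⟩ := sol
  exact ((hsol t ht x).1).continuousAt

/-- Extraction of a pointwise lower bound from interval masses. -/
theorem ge_of_mass {ν : ℝ → ℝ} {u : ℝ → ℝ → ℝ} (hν : Continuous ν) (hν0 : ∀ x, 0 < ν x)
    {t x b c' : ℝ} (hu : Continuous (u t)) (hxb : x < b) {G : ℝ → ℝ} (hG : HasDerivAt G c' (prim ν x))
    (hG0 : G (prim ν x) = 0) (h : ∀ q ∈ Ioo x b, G (prim ν q) ≤ mass ν u t x q) : c' ≤ u t x := by
  have h1 : HasDerivAt (fun y => mass ν u t x y) (ν x * u t x) x :=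
    ((hν.mul hu).integral_hasStrictDerivAt x x).hasDerivAt
  have h3 := h1.sub (hG.comp x (prim_hasDerivAt hν x))
  have hnn : 0 ≤ ν x * u t x - c' * ν x := by
    apply deriv_nonneg_of_ev_right h3
    apply Eventually.frequently
    filter_upwards [Ioo_mem_nhdsGT hxb] with y hy
    have h2 := h y hy
    simp only [Pi.sub_apply, Function.comp_apply, hG0]
    have : mass ν u t x x = 0 := by simp [mass]
    linarith
  have h4 : 0 ≤ ν x * (u t x - c') := by linarith
  have := nonneg_of_mul_nonneg_right h4 (hν0 x)
  linarith

theorem mass_ge_const {ν : ℝ → ℝ} {u : ℝ → ℝ → ℝ} (hν : Continuous ν) (hν0 : ∀ x, 0 < ν x)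
    {t p q c : ℝ} (hu : Continuous (u t)) (hpq : p ≤ q) (h : ∀ x ∈ Icc p q, c ≤ u t x) :
    c * (prim ν q - prim ν p) ≤ mass ν u t p q := by
  rw [prim_sub hν, ← intervalIntegral.integral_const_mul]
  apply intervalIntegral.integral_mono_on hpq (Continuous.intervalIntegrable (by fun_prop) _ _)
    (Continuous.intervalIntegrable (by fun_prop) _ _)
  intro x hx
  rw [mul_comm]
  exact mul_le_mul_of_nonneg_left (h x hx) (hν0 x).le

set_option maxHeartbeats 800000 in
/-- Minimum principle on a cylinder on which the solution is known to be continuous. -/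
theorem min_principle {ν a : ℝ → ℝ} {W : ℝ} {u : ℝ → ℝ → ℝ} (hν : Continuous ν) (ha : Continuous a)
    (hν0 : ∀ x, 0 < ν x) (ha0 : ∀ x, 0 < a x) (hW : 0 ≤ W)
    (sol : IsCanonicalSolOn ν a W u (Ioi 0)) (hM : MassCont ν u) {α t3 x1 x2 c : ℝ} (hα : 0 < α)
    (hα3 : α < t3)
    (hu : ContinuousOn (fun z : ℝ × ℝ => u z.1 z.2) (Ioo α t3 ×ˢ Icc x1 x2))
    (hs1 : ∀ s ∈ Ioo α t3, c < u s x1) (hs2 : ∀ s ∈ Ioo α t3, c < u s x2)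
    (hst : ∀ x ∈ Icc x1 x2, c ≤ u α x) : ∀ x ∈ Ioo x1 x2, c ≤ u t3 x := by
  intro x hx
  have hNm := prim_strictMono hν hν0
  have hx12 : x1 < x2 := hx.1.trans hx.2
  have main : ∀ t ∈ Ioo α t3, c ≤ u t x := by
    intro t ht
    have ht0 : 0 < t := hα.trans ht.1
    have hmass : ∀ p q, x1 ≤ p → p ≤ q → q ≤ x2 → c * (prim ν q - prim ν p) ≤ mass ν u t p q := by
      intro p q hp hpq hq
      apply le_of_forall_pos_le_add
      intro ε hε
      set η := ε / (1 + (t - α)) with hη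
      have hpos : 0 < 1 + (t - α) := by linarith [ht.1]
      have hη0 : 0 < η := div_pos hε hpos
      obtain ⟨δ, hδ, hδ'⟩ := hM α t hα η hη0
      set g := min (δ / 2) ((t - α) / 2) with hg
      have hg0 : 0 < g := lt_min (by linarith) (by linarith [ht.1])
      have hg1 : g ≤ δ / 2 := min_le_left _ _
      have hg2 : g ≤ (t - α) / 2 := min_le_right _ _
      set s1 := α + g with hs1d
      have hcomp := comparison (u := u) hν ha hν0 ha0 hW sol (τ0 := α + g / 2) (τ1 := s1)
        (τ2 := t) (τ3 := (t + t3) / 2) (by linarith) (by linarith) (by linarith [ht.1])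
        (by linarith [ht.2]) hx12
        (hu.mono (prod_mono (fun s hs => ⟨by linarith [hs.1], by linarith [hs.2, ht.2]⟩) subset_rfl))
        (B := fun τ z1 z2 => c * (z2 - z1) - η - η * (τ - s1)) (Bt := fun _ _ _ => -η)
        (B1 := fun _ _ _ => -c) (B2 := fun _ _ _ => c) (B11 := fun _ _ _ => 0)
        (B22 := fun _ _ _ => 0) (by fun_prop)
        (fun τ z1 z2 => hasDerivAt_quad (c * (z2 - z1) - η + η * s1) (-η) 0
          (fun τ => by ring) (by ring))
        (fun τ z1 z2 => hasDerivAt_quad (c * z2 - η - η * (τ - s1)) (-c) 0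
          (fun τ => by ring) (by ring))
        (fun τ z1 z2 => hasDerivAt_quad (-(c * z1) - η - η * (τ - s1)) c 0
          (fun τ => by ring) (by ring))
        (fun τ z1 z2 => hasDerivAt_const _ _)
        (fun τ z1 z2 => hasDerivAt_const _ _)
        ?_ ?_ ?_ ?_ ?_
      · have h1 := hcomp t ⟨by linarith [ht.1], le_rfl⟩ p q hp hpq hq
        have h2 : η + η * (t - s1) ≤ ε := by
          have : η * (1 + (t - α)) = ε := by rw [hη]; field_simp
          have h3 : η * (t - s1) ≤ η * (t - α) := mul_le_mul_of_nonneg_left (by linarith) hη0.le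
          linarith
        linarith
      · intro p q hp hpq hq
        have h1 := hδ' s1 ⟨by linarith, by linarith [ht.1]⟩ α ⟨le_rfl, ht.1.le⟩
          (by rw [abs_lt]; constructor <;> linarith) p q hpq
        have h2 := (abs_le.1 h1).1
        have h3 := mass_ge_const hν hν0 (sol_contx sol hα) hpq
          (fun x hx => hst x ⟨hp.trans hx.1, hx.2.trans hq⟩)
        linarith [mul_zero η, sub_self s1, show η * (s1 - s1) = 0 by ring]
      · intro τ hτ p hp
        have : 0 ≤ η * (τ - s1) := mul_nonneg hη0.le (by linarith [hτ.1])
        linarith [show c * (prim ν p - prim ν p) = 0 by ring]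
      · intro τ hτ q hq
        right
        intro s hs
        have := hs1 s ⟨by linarith [hs.1], by linarith [hs.2, ht.2]⟩
        linarith
      · intro τ hτ q hq
        right
        intro s hs
        exact hs2 s ⟨by linarith [hs.1], by linarith [hs.2, ht.2]⟩
      · intro τ hτ p q hp hpq hq _
        have : ν q ^ 2 * a q * 0 + ν p ^ 2 * a p * 0 - W * (-c + c) = 0 := by ring
        rw [this]; linarith
    refine ge_of_mass hν hν0 (sol_contx sol ht0) hx.2 (G := fun z => c * (z - prim ν x))
      (hasDerivAt_quad (-(c * prim ν x)) c 0 (fun z => by ring) (by ring)) (by simp) ?_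
    intro q hq
    exact hmass x q hx.1.le hq.1.le hq.2.le
  have hcont : Tendsto (fun s => u s x) (𝓝[<] t3) (𝓝 (u t3 x)) :=
    (sol_contt sol (hα.trans hα3) x).tendsto.mono_left nhdsWithin_le_nhds
  apply ge_of_tendsto hcont
  filter_upwards [Ioo_mem_nhdsLT hα3] with s hs
  exact main s hs

/-- Left continuity, lower part. -/
theorem left_lower {ν a : ℝ → ℝ} {W lam : ℝ} {u : ℝ → ℝ → ℝ} (hν : Continuous ν)
    (ha : Continuous a)
    (hν0 : ∀ x, 0 < ν x) (ha0 : ∀ x, 0 < a x) (hW : 0 ≤ W) (hlam : 0 < lam)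
    (hAl : ∀ x, lam ≤ ν x ^ 2 * a x)
    (sol : IsCanonicalSolOn ν a W u (Ioi 0)) (hM : MassCont ν u) {α ts x1 x2 xs : ℝ} (hα : 0 < α)
    (hαs : α < ts) (hx1 : x1 < xs) (hx2 : xs < x2)
    (hu : ContinuousOn (fun z : ℝ × ℝ => u z.1 z.2) (Ioo α ts ×ˢ Icc x1 x2)) :
    ∀ ε > 0, ∃ δ > 0, ∀ t ∈ Ioo (ts - δ) ts, ∀ x ∈ Ioo (xs - δ) (xs + δ),
      -ε ≤ u ts x - u t x := by
  intro ε hε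
  have hNm := prim_strictMono hν hν0
  have hN := prim_continuous hν
  set g := (ts - α) / 4 with hg
  have hg0 : 0 < g := by rw [hg]; linarith
  set ℓ := min (prim ν xs - prim ν x1) (prim ν x2 - prim ν xs) / 2 with hℓ
  have hm0 : 0 < min (prim ν xs - prim ν x1) (prim ν x2 - prim ν xs) :=
    lt_min (sub_pos.2 (hNm hx1)) (sub_pos.2 (hNm hx2))
  have hℓ0 : 0 < ℓ := by rw [hℓ]; linarith
  have hℓ1 : 2 * ℓ ≤ prim ν xs - prim ν x1 := by
    have := min_le_left (prim ν xs - prim ν x1) (prim ν x2 - prim ν xs); rw [hℓ]; linarith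
  have hℓ2 : 2 * ℓ ≤ prim ν x2 - prim ν xs := by
    have := min_le_right (prim ν xs - prim ν x1) (prim ν x2 - prim ν xs); rw [hℓ]; linarith
  obtain ⟨C1, hC1, hinter⟩ := interior_est hν ha hν0 ha0 hW hlam hAl (hx1.trans hx2) hℓ0 hg0
  obtain ⟨δ1, hδ1, hN1⟩ := Metric.continuousAt_iff.1 (hN.continuousAt (x := xs)) ℓ hℓ0
  set η := ε / C1 with hη
  have hη0 : 0 < η := div_pos hε hC1
  obtain ⟨δ2, hδ2, hM2⟩ := hM α ts hα η hη0
  refine ⟨min g (min δ1 δ2), lt_min hg0 (lt_min hδ1 hδ2), ?_⟩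
  intro t ht x hx
  have hmg : min g (min δ1 δ2) ≤ g := min_le_left _ _
  have hm1 : min g (min δ1 δ2) ≤ δ1 := (min_le_right _ _).trans (min_le_left _ _)
  have hm2 : min g (min δ1 δ2) ≤ δ2 := (min_le_right _ _).trans (min_le_right _ _)
  have hxN : |prim ν x - prim ν xs| < ℓ := by
    have : dist x xs < δ1 := by
      rw [Real.dist_eq, abs_lt]; constructor <;> linarith [hx.1, hx.2]
    exact hN1 this
  have hxN' := abs_lt.1 hxN
  have key : ∀ k, 0 ≤ k → k < ts - t → -ε ≤ u (t + k) x - u t x := by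
    intro k hk hkt
    have hd := hinter (fun s y => u (s + k) y - u s y) (sol_shift_sub hk sol) (α + g) (α + 2 * g) t
      ((t + (ts - k)) / 2) (by linarith) (by linarith) (by linarith [ht.1]) (by linarith) ?_ η hη0 ?_
      x (by linarith) (by linarith)
    · have : C1 * η = ε := by rw [hη]; field_simp
      rw [this] at hd; exact hd
    · apply ContinuousOn.sub
      · refine hu.comp (f := fun z : ℝ × ℝ => (z.1 + k, z.2)) (by fun_prop) ?_
        intro z hz
        exact ⟨⟨by simp only; linarith [hz.1.1], by simp only; linarith [hz.1.2]⟩, hz.2⟩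
      · refine hu.mono ?_
        intro z hz
        exact ⟨⟨by linarith [hz.1.1], by linarith [hz.1.2]⟩, hz.2⟩
    · intro s hs p q hp hpq hq
      have hs0 : 0 < s := by linarith [hs.1]
      have h1 : mass ν (fun s y => u (s + k) y - u s y) s p q
          = mass ν u (s + k) p q - mass ν u s p q := by
        simp only [mass, mul_sub]
        rw [intervalIntegral.integral_sub]
        · exact (hν.mul (sol_contx sol (by linarith))).intervalIntegrable _ _
        · exact (hν.mul (sol_contx sol hs0)).intervalIntegrable _ _
      rw [h1]
      have h2 := hM2 (s + k) ⟨by linarith [hs.1], by linarith [hs.2]⟩ s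
        ⟨by linarith [hs.1], by linarith [hs.2]⟩
        (by rw [abs_lt]; constructor <;> linarith [ht.1]) p q hpq
      exact (abs_le.1 h2).1
  have hcont : Tendsto (fun s => u s x - u t x) (𝓝[<] ts) (𝓝 (u ts x - u t x)) :=
    ((sol_contt sol (hα.trans hαs) x).tendsto.mono_left nhdsWithin_le_nhds).sub_const _
  apply ge_of_tendsto hcont
  filter_upwards [Ioo_mem_nhdsLT ht.2] with s hs
  have := key (s - t) (by linarith [hs.1]) (by linarith [hs.2])
  simpa using this

theorem left_cont {ν a : ℝ → ℝ} {W lam : ℝ} {u : ℝ → ℝ → ℝ} (hν : Continuous ν)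
    (ha : Continuous a)
    (hν0 : ∀ x, 0 < ν x) (ha0 : ∀ x, 0 < a x) (hW : 0 ≤ W) (hlam : 0 < lam)
    (hAl : ∀ x, lam ≤ ν x ^ 2 * a x)
    (sol : IsCanonicalSolOn ν a W u (Ioi 0)) (hM : MassCont ν u) {α ts x1 x2 xs : ℝ} (hα : 0 < α)
    (hαs : α < ts) (hx1 : x1 < xs) (hx2 : xs < x2)
    (hu : ContinuousOn (fun z : ℝ × ℝ => u z.1 z.2) (Ioo α ts ×ˢ Icc x1 x2)) :
    ∀ ε > 0, ∃ δ > 0, ∀ t ∈ Ioo (ts - δ) ts, ∀ x ∈ Ioo (xs - δ) (xs + δ),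
      |u ts x - u t x| ≤ ε := by
  intro ε hε
  obtain ⟨δ1, h1, h1'⟩ := left_lower hν ha hν0 ha0 hW hlam hAl sol hM hα hαs hx1 hx2 hu ε hε
  obtain ⟨δ2, h2, h2'⟩ := left_lower hν ha hν0 ha0 hW hlam hAl (sol_neg sol) hM.neg hα hαs hx1 hx2
    hu.neg ε hε
  have l1 := min_le_left δ1 δ2
  have l2 := min_le_right δ1 δ2
  refine ⟨min δ1 δ2, lt_min h1 h2, fun t ht x hx => abs_le.2 ⟨?_, ?_⟩⟩
  · exact h1' t ⟨by linarith [ht.1], ht.2⟩ x ⟨by linarith [hx.1], by linarith [hx.2]⟩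
  · have := h2' t ⟨by linarith [ht.1], ht.2⟩ x ⟨by linarith [hx.1], by linarith [hx.2]⟩
    linarith

open Set Topology MeasureTheory Filter

/-- A point of the bad set at which nearby bad points are uniformly Lipschitz in space is a
continuity point. -/
theorem cont_at_bad {ν a : ℝ → ℝ} {W lam : ℝ} {u : ℝ → ℝ → ℝ} (hν : Continuous ν)
    (ha : Continuous a)
    (hν0 : ∀ x, 0 < ν x) (ha0 : ∀ x, 0 < a x) (hW : 0 ≤ W) (hlam : 0 < lam)
    (hAl : ∀ x, lam ≤ ν x ^ 2 * a x)
    (sol : IsCanonicalSolOn ν a W u (Ioi 0)) (hM : MassCont ν u) {O Q : Set (ℝ × ℝ)}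
    (hO : IsOpen O) (hOc : ∀ z ∈ O, ContinuousAt (fun z : ℝ × ℝ => u z.1 z.2) z)
    {ts xs K ρ : ℝ} (hts : 0 < ts) (hbad : (ts, xs) ∉ O) (hQ : Q ∈ 𝓝 (ts, xs)) (hK : 0 < K)
    (hρ : 0 < ρ)
    (hLip : ∀ z ∈ Q, 0 < z.1 → z ∉ O → ∀ x', |x' - z.2| < ρ →
      |u z.1 x' - u z.1 z.2| ≤ K * |x' - z.2|) :
    ContinuousAt (fun z : ℝ × ℝ => u z.1 z.2) (ts, xs) := by
  obtain ⟨r, hr, hrQ⟩ := Metric.mem_nhds_iff.1 hQ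
  set r0 := min r (ts / 2) with hr0
  have hr00 : 0 < r0 := lt_min hr (by linarith)
  have hr0r : r0 ≤ r := min_le_left _ _
  have hr0t : r0 ≤ ts / 2 := min_le_right _ _
  have hbox : ∀ t x, |t - ts| < r0 → |x - xs| < r0 → (t, x) ∈ Q := by
    intro t x h1 h2
    apply hrQ
    rw [Metric.mem_ball, Prod.dist_eq, Real.dist_eq, Real.dist_eq]
    exact max_lt (by simp only; linarith) (by simp only; linarith)
  have hpt : ∀ t, |t - ts| < r0 → 0 < t := by
    intro t h; have := (abs_lt.1 h).1; linarith
  set c := u ts xs with hc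
  have main : ∀ ε > 0, ∀ᶠ z : ℝ × ℝ in 𝓝 (ts, xs), |u z.1 z.2 - c| ≤ 3 * ε := by
    intro ε hε
    set ρ' := min (r0 / 2) (min (ρ / 4) (ε / (4 * K))) with hρ'
    have hρ'0 : 0 < ρ' := lt_min (by linarith) (lt_min (by linarith) (by positivity))
    have hρ1 : ρ' ≤ r0 / 2 := min_le_left _ _
    have hρ2 : ρ' ≤ ρ / 4 := (min_le_right _ _).trans (min_le_left _ _)
    have hρ3 : ρ' ≤ ε / (4 * K) := (min_le_right _ _).trans (min_le_right _ _)
    have hKρ : K * ρ' ≤ ε / 4 := by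
      have := mul_le_mul_of_nonneg_left hρ3 hK.le
      have h2 : K * (ε / (4 * K)) = ε / 4 := by field_simp
      linarith
    set J := Icc (xs - ρ') (xs + ρ') with hJ
    have hJs : ∀ x ∈ J, |x - xs| ≤ ρ' := by
      intro x hx; rw [abs_le]; constructor <;> linarith [hx.1, hx.2]
    have hsx : ∀ x ∈ J, |u ts x - c| ≤ ε / 4 := by
      intro x hx
      have h1 := hJs x hx
      have h2 := hLip (ts, xs) (mem_of_mem_nhds hQ) hts hbad x (by simp only; linarith)
      exact h2.trans ((mul_le_mul_of_nonneg_left h1 hK.le).trans hKρ)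
    have hev : ∀ x ∈ J, ∃ δ > 0, ∀ t, |t - ts| < δ → |u t x - c| < ε := by
      intro x hx
      have h1 := Metric.continuousAt_iff.1 (sol_contt sol hts x) (ε / 2) (by linarith)
      obtain ⟨δ, hδ, h⟩ := h1
      refine ⟨δ, hδ, fun t ht => ?_⟩
      have h2 := h (x := t) (by rw [Real.dist_eq]; exact ht)
      rw [Real.dist_eq] at h2
      have h3 := hsx x hx
      have := abs_sub_le (u t x) (u ts x) c
      linarith
    have hxsJ : xs ∈ J := ⟨by linarith, by linarith⟩
    have hx1J : xs - ρ' ∈ J := ⟨by linarith, by linarith⟩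
    have hx2J : xs + ρ' ∈ J := ⟨by linarith, by linarith⟩
    obtain ⟨δa, hδa, ha1⟩ := hev _ hxsJ
    obtain ⟨δb, hδb, hb1⟩ := hev _ hx1J
    obtain ⟨δc, hδc, hc1⟩ := hev _ hx2J
    set δ := min r0 (min δa (min δb δc)) with hδ
    have hδ0 : 0 < δ := lt_min hr00 (lt_min hδa (lt_min hδb hδc))
    have hδr : δ ≤ r0 := min_le_left _ _
    have hδ1 : δ ≤ δa := (min_le_right _ _).trans (min_le_left _ _)
    have hδ2 : δ ≤ δb := (min_le_right _ _).trans ((min_le_right _ _).trans (min_le_left _ _))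
    have hδ3 : δ ≤ δc := (min_le_right _ _).trans ((min_le_right _ _).trans (min_le_right _ _))
    have hB : ∀ t, |t - ts| < δ → (∃ x ∈ J, (t, x) ∉ O) → ∀ x ∈ J, |u t x - c| ≤ 2 * ε := by
      rintro t ht ⟨x, hx, hxO⟩ x' hx'
      have hx1 := hJs x hx
      have hx1' := hJs x' hx'
      have hQx := hbox t x (by linarith) (by linarith)
      have hl := hLip (t, x) hQx (hpt t (by linarith)) hxO
      have e1 : |x' - x| ≤ 2 * ρ' := by
        have := abs_sub_le x' xs x; rw [abs_sub_comm xs x] at this; linarith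
      have e2 : |xs - x| ≤ ρ' := by rw [abs_sub_comm]; exact hx1
      have l1 := hl x' (by simp only; linarith)
      have l2 := hl xs (by simp only; linarith)
      simp only at l1 l2
      have m1 := mul_le_mul_of_nonneg_left e1 hK.le
      have m2 := mul_le_mul_of_nonneg_left e2 hK.le
      have l3 := ha1 t (by linarith)
      have t1 := abs_sub_le (u t x') (u t x) c
      have t2 := abs_sub_le (u t x) (u t xs) c
      rw [abs_sub_comm (u t x) (u t xs)] at t2
      linarith
    have hprop : ∀ t' t, |t' - ts| < δ → |t - ts| < δ → t' ≤ t → (∃ x ∈ J, (t', x) ∉ O) →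
        ∀ x ∈ Ioo (xs - ρ') (xs + ρ'), |u t x - c| ≤ 3 * ε := by
      intro t' t ht' ht htt hbad' x hx
      by_cases htB : ∃ x ∈ J, (t, x) ∉ O
      · have := hB t ht htB x (Ioo_subset_Icc_self hx); linarith
      · push Not at htB
        set BT : Set ℝ := Prod.fst '' ((Icc t' t ×ˢ J) \ O) with hBT
        have hBTc : IsCompact BT :=
          (((isCompact_Icc.prod isCompact_Icc).diff hO)).image continuous_fst
        have hBTn : BT.Nonempty := by
          obtain ⟨y, hy, hyO⟩ := hbad'
          exact ⟨t', (t', y), ⟨⟨⟨le_rfl, htt⟩, hy⟩, hyO⟩, rfl⟩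
        obtain ⟨α, hαm, hαu⟩ := hBTc.exists_isGreatest hBTn
        obtain ⟨⟨α', y⟩, ⟨⟨hα1, hyJ⟩, hyO⟩, hαe⟩ := hαm
        simp only at hαe hα1 hyJ
        subst hαe
        have hαt : α' < t := by
          rcases eq_or_lt_of_le hα1.2 with h | h
          · subst h; exact absurd (htB y hyJ) hyO
          · exact h
        have ht1 := abs_lt.1 ht'
        have ht2 := abs_lt.1 ht
        have hαδ : |α' - ts| < δ := by
          rw [abs_lt]; constructor <;> linarith [hα1.1]
        have hα0 : 0 < α' := hpt α' (by linarith)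
        have hin : ∀ s ∈ Ioo α' t, ∀ z ∈ J, (s, z) ∈ O := by
          intro s hs z hz
          by_contra hcon
          have : s ≤ α' := hαu ⟨(s, z), ⟨⟨⟨by linarith [hα1.1, hs.1], hs.2.le⟩, hz⟩, hcon⟩, rfl⟩
          linarith [hs.1]
        have hco : ContinuousOn (fun z : ℝ × ℝ => u z.1 z.2)
            (Ioo α' t ×ˢ Icc (xs - ρ') (xs + ρ')) := fun z hz =>
          (hOc z (hin z.1 hz.1 z.2 hz.2)).continuousWithinAt
        have hside : ∀ s ∈ Ioo α' t, |u s (xs - ρ') - c| < ε ∧ |u s (xs + ρ') - c| < ε := by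
          intro s hs
          have : |s - ts| < δ := by rw [abs_lt]; constructor <;> linarith [hα1.1, hs.1, hs.2]
          exact ⟨hb1 s (by linarith), hc1 s (by linarith)⟩
        have hstart := hB α' hαδ ⟨y, hyJ, hyO⟩
        have low := min_principle hν ha hν0 ha0 hW sol hM (c := c - 3 * ε) hα0 hαt hco
          (fun s hs => by linarith [(abs_lt.1 (hside s hs).1).1])
          (fun s hs => by linarith [(abs_lt.1 (hside s hs).2).1])
          (fun z hz => by linarith [(abs_le.1 (hstart z hz)).1]) x hx
        have up := min_principle hν ha hν0 ha0 hW (sol_neg sol) hM.neg (c := -(c + 3 * ε)) hα0 hαt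
          hco.neg
          (fun s hs => by linarith [(abs_lt.1 (hside s hs).1).2])
          (fun s hs => by linarith [(abs_lt.1 (hside s hs).2).2])
          (fun z hz => by linarith [(abs_le.1 (hstart z hz)).2]) x hx
        rw [abs_le]; constructor <;> linarith
    by_cases hex : ∃ t', ts - δ < t' ∧ t' < ts ∧ ∃ x ∈ J, (t', x) ∉ O
    · obtain ⟨t', h1, h2, hx⟩ := hex
      have hn : Ioo t' (ts + δ) ×ˢ Ioo (xs - ρ') (xs + ρ') ∈ 𝓝 (ts, xs) :=
        prod_mem_nhds (Ioo_mem_nhds h2 (by linarith)) (Ioo_mem_nhds (by linarith) (by linarith))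
      filter_upwards [hn] with z hz
      exact hprop t' z.1 (by rw [abs_lt]; constructor <;> linarith)
        (by rw [abs_lt]; constructor <;> linarith [hz.1.1, hz.1.2]) hz.1.1.le hx z.2 hz.2
    · push Not at hex
      have hco : ContinuousOn (fun z : ℝ × ℝ => u z.1 z.2)
            (Ioo (ts - δ) ts ×ˢ Icc (xs - ρ') (xs + ρ')) := fun z hz =>
          (hOc z (hex z.1 hz.1.1 hz.1.2 z.2 hz.2)).continuousWithinAt
      obtain ⟨δ', hδ', hlc⟩ := left_cont hν ha hν0 ha0 hW hlam hAl sol hM (by linarith : 0 < ts - δ)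
        (by linarith) (by linarith : xs - ρ' < xs) (by linarith : xs < xs + ρ') hco ε hε
      have hn : Ioo (ts - min δ δ') (ts + δ) ×ˢ Ioo (xs - min ρ' δ') (xs + min ρ' δ')
          ∈ 𝓝 (ts, xs) := by
        have e1 : 0 < min δ δ' := lt_min hδ0 hδ'
        have e2 : 0 < min ρ' δ' := lt_min hρ'0 hδ'
        exact prod_mem_nhds (Ioo_mem_nhds (by linarith) (by linarith))
          (Ioo_mem_nhds (by linarith) (by linarith))
      have l1 := min_le_left δ δ'
      have l2 := min_le_right δ δ'
      have l3 := min_le_left ρ' δ'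
      have l4 := min_le_right ρ' δ'
      filter_upwards [hn] with z hz
      have hz1 := hz.1.1
      have hz2 := hz.1.2
      have hz3 := hz.2.1
      have hz4 := hz.2.2
      by_cases hzt : ts ≤ z.1
      · exact hprop ts z.1 (by simpa using hδ0)
          (by rw [abs_lt]; constructor <;> linarith) hzt ⟨xs, hxsJ, hbad⟩ z.2
          ⟨by linarith, by linarith⟩
      · push Not at hzt
        have h1 := hlc z.1 ⟨by linarith, hzt⟩ z.2 ⟨by linarith, by linarith⟩
        have h2 := hsx z.2 ⟨by linarith, by linarith⟩
        have := abs_sub_le (u z.1 z.2) (u ts z.2) c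
        rw [abs_sub_comm (u z.1 z.2) (u ts z.2)] at this
        linarith
  rw [ContinuousAt, Metric.tendsto_nhds]
  intro ε hε
  filter_upwards [main (ε / 4) (by linarith)] with z hz
  rw [Real.dist_eq]
  linarith

/-- Joint continuity of the solution. -/
theorem joint_cont {ν a : ℝ → ℝ} {W lam : ℝ} {u : ℝ → ℝ → ℝ} (hν : Continuous ν)
    (ha : Continuous a)
    (hν0 : ∀ x, 0 < ν x) (ha0 : ∀ x, 0 < a x) (hW : 0 ≤ W) (hlam : 0 < lam)
    (hAl : ∀ x, lam ≤ ν x ^ 2 * a x)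
    (sol : IsCanonicalSolOn ν a W u (Ioi 0)) (hM : MassCont ν u) :
    ∀ z : ℝ × ℝ, 0 < z.1 → ContinuousAt (fun z : ℝ × ℝ => u z.1 z.2) z := by
  set O : Set (ℝ × ℝ) := interior {z | ContinuousAt (fun z : ℝ × ℝ => u z.1 z.2) z} with hOdef
  have hO : IsOpen O := isOpen_interior
  have hOc : ∀ z ∈ O, ContinuousAt (fun z : ℝ × ℝ => u z.1 z.2) z := fun z hz =>
    interior_subset hz
  set Db : Set (ℝ × ℝ) := {z | 0 < z.1} ∩ Oᶜ with hDb
  have hpos : IsOpen {z : ℝ × ℝ | 0 < z.1} := isOpen_lt continuous_const continuous_fst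
  rcases Db.eq_empty_or_nonempty with hemp | hne
  · intro z hz
    by_contra hcon
    have : z ∈ Db := ⟨hz, fun h => hcon (hOc z h)⟩
    rw [hemp] at this; exact this
  exfalso
  have hlc : IsLocallyClosed Db := hpos.isLocallyClosed.inter hO.isClosed_compl.isLocallyClosed
  have : LocallyCompactSpace Db := hlc.locallyCompactSpace
  have : Nonempty Db := hne.to_subtype
  set F : ℕ → Set Db := fun n => {z | ∀ x', |x' - z.1.2| < 1 / ((n : ℝ) + 1) →
      |u z.1.1 x' - u z.1.1 z.1.2| ≤ ((n : ℝ) + 1) * |x' - z.1.2|} with hF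
  have hFc : ∀ n, IsClosed (F n) := by
    intro n
    apply IsSeqClosed.isClosed
    intro zk z hzk hlim x' hx'
    have hv : Tendsto (fun k => (zk k).1) atTop (𝓝 z.1) := (continuous_subtype_val.tendsto z).comp hlim
    have h1 : Tendsto (fun k => (zk k).1.1) atTop (𝓝 z.1.1) := (continuous_fst.tendsto _).comp hv
    have h2 : Tendsto (fun k => (zk k).1.2) atTop (𝓝 z.1.2) := (continuous_snd.tendsto _).comp hv
    have ht0 : 0 < z.1.1 := z.2.1
    have hu : ∀ x, Tendsto (fun k => u (zk k).1.1 x) atTop (𝓝 (u z.1.1 x)) := fun x =>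
      (sol_contt sol ht0 x).tendsto.comp h1
    have habs : ∀ x, Tendsto (fun k => |x - (zk k).1.2|) atTop (𝓝 |x - z.1.2|) := fun x =>
      (tendsto_const_nhds.sub h2).abs
    have hev : ∀ x, |x - z.1.2| < 1 / ((n : ℝ) + 1) → ∀ᶠ k in atTop,
        |u (zk k).1.1 x - u (zk k).1.1 (zk k).1.2| ≤ ((n : ℝ) + 1) * |x - (zk k).1.2| := by
      intro x hx
      filter_upwards [(habs x).eventually (gt_mem_nhds hx)] with k hk
      exact hzk k x hk
    have hn1 : (0:ℝ) < (n : ℝ) + 1 := by positivity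
    have hself := hev z.1.2 (by rw [sub_self, abs_zero]; positivity)
    have hd0 : Tendsto (fun k => u (zk k).1.1 z.1.2 - u (zk k).1.1 (zk k).1.2) atTop (𝓝 0) := by
      apply squeeze_zero_norm' hself
      have := (habs z.1.2).const_mul ((n:ℝ) + 1)
      simpa using this
    have hdiag : Tendsto (fun k => u (zk k).1.1 (zk k).1.2) atTop (𝓝 (u z.1.1 z.1.2)) := by
      have := (hu z.1.2).sub hd0
      simpa using this
    exact le_of_tendsto_of_tendsto ((hu x').sub hdiag).abs ((habs x').const_mul _) (hev x' hx')
  have hFU : ⋃ n, F n = univ := by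
    rw [eq_univ_iff_forall]
    intro z
    have ht0 : 0 < z.1.1 := z.2.1
    obtain ⟨ut, ux, fl, hsol⟩ := sol
    have hO := (hsol z.1.1 ht0 z.1.2).2.1.isBigO_sub
    obtain ⟨C, hC⟩ := hO.bound
    obtain ⟨δ, hδ, hδ'⟩ := Metric.eventually_nhds_iff.1 hC
    obtain ⟨n, hn⟩ := exists_nat_ge (max C (1 / δ))
    rw [mem_iUnion]
    refine ⟨n, fun x' hx' => ?_⟩
    have h1 : 1 / ((n:ℝ) + 1) ≤ δ := by
      rw [div_le_iff₀ (by positivity)]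
      have := (le_max_right C (1 / δ)).trans hn
      rw [div_le_iff₀ hδ] at this
      nlinarith
    have h2 := hδ' (y := x') (by rw [Real.dist_eq]; linarith)
    rw [Real.norm_eq_abs, Real.norm_eq_abs] at h2
    refine h2.trans (mul_le_mul_of_nonneg_right ?_ (abs_nonneg _))
    linarith [(le_max_left C (1 / δ)).trans hn]
  obtain ⟨n, z0, hz0⟩ := nonempty_interior_of_iUnion_of_closed hFc hFU
  rw [mem_interior_iff_mem_nhds, nhds_subtype, mem_comap] at hz0
  obtain ⟨Q0, hQ0, hQF⟩ := hz0
  have hQ1 : Q0 ∩ {z : ℝ × ℝ | 0 < z.1} ∈ 𝓝 z0.1 := inter_mem hQ0 (hpos.mem_nhds z0.2.1)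
  obtain ⟨Q, hQsub, hQo, hzQ⟩ := mem_nhds_iff.1 hQ1
  have hn1 : (0:ℝ) < (n : ℝ) + 1 := by positivity
  have hall : Q ⊆ {z | ContinuousAt (fun z : ℝ × ℝ => u z.1 z.2) z} := by
    intro z hz
    by_cases hzO : z ∈ O
    · exact hOc z hzO
    · refine cont_at_bad hν ha hν0 ha0 hW hlam hAl sol hM hO hOc (ts := z.1) (xs := z.2) (Q := Q)
        (K := (n:ℝ) + 1) (ρ := 1 / ((n:ℝ) + 1)) (hQsub hz).2 hzO (hQo.mem_nhds hz) hn1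
        (by positivity) ?_
      intro w hw hw0 hwO
      exact hQF (show (⟨w, ⟨hw0, hwO⟩⟩ : Db) ∈ Subtype.val ⁻¹' Q0 from (hQsub hw).1)
  exact z0.2.2 (interior_maximal hall hQo hzQ)

open Set Topology MeasureTheory Filter

theorem prim_exists_ge {ν : ℝ → ℝ} {m0 : ℝ} (hν : Continuous ν) (hm : 0 < m0)
    (h : ∀ x, m0 ≤ ν x) (q M : ℝ) : ∃ b, q < b ∧ M ≤ prim ν b := by
  set k := max 0 ((M - prim ν q) / m0) + 1 with hk
  have h1 : 0 ≤ max 0 ((M - prim ν q) / m0) := le_max_left _ _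
  have h2 : (M - prim ν q) / m0 ≤ max 0 ((M - prim ν q) / m0) := le_max_right _ _
  refine ⟨q + k, by linarith, ?_⟩
  have h3 : ∫ _ in q..(q + k), m0 ≤ ∫ z in q..(q + k), ν z :=
    intervalIntegral.integral_mono_on (by linarith) (by simp) (hν.intervalIntegrable _ _)
      (fun x _ => h x)
  rw [← prim_sub hν, intervalIntegral.integral_const, smul_eq_mul] at h3
  rw [div_le_iff₀ hm] at h2
  nlinarith

theorem prim_exists_le {ν : ℝ → ℝ} {m0 : ℝ} (hν : Continuous ν) (hm : 0 < m0)
    (h : ∀ x, m0 ≤ ν x) (q M : ℝ) : ∃ b, b < q ∧ prim ν b ≤ M := by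
  set k := max 0 ((prim ν q - M) / m0) + 1 with hk
  have h1 : 0 ≤ max 0 ((prim ν q - M) / m0) := le_max_left _ _
  have h2 : (prim ν q - M) / m0 ≤ max 0 ((prim ν q - M) / m0) := le_max_right _ _
  refine ⟨q - k, by linarith, ?_⟩
  have h3 : ∫ _ in (q - k)..q, m0 ≤ ∫ z in (q - k)..q, ν z :=
    intervalIntegral.integral_mono_on (by linarith) (by simp) (hν.intervalIntegrable _ _)
      (fun x _ => h x)
  rw [← prim_sub hν, intervalIntegral.integral_const, smul_eq_mul] at h3
  rw [div_le_iff₀ hm] at h2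
  nlinarith

theorem mass_nonneg {ν : ℝ → ℝ} {u : ℝ → ℝ → ℝ} (hν0 : ∀ x, 0 < ν x) {t p q : ℝ}
    (hu : ∀ x, 0 ≤ u t x) (hpq : p ≤ q) : 0 ≤ mass ν u t p q :=
  intervalIntegral.integral_nonneg hpq fun x _ => mul_nonneg (hν0 x).le (hu x)

/-- Initial concentration of the mass near the pole. -/
theorem start_mass {ν : ℝ → ℝ} {u : ℝ → ℝ → ℝ} (hν : Continuous ν) (hν0 : ∀ x, 0 < ν x) {y : ℝ}
    (hu0 : ∀ t, 0 < t → ∀ x, 0 ≤ u t x) (hfi : ∀ t, 0 < t → Integrable (fun x => ν x * u t x))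
    (hw : ∀ φ : ℝ → ℝ, Continuous φ → (∃ B : ℝ, ∀ x, |φ x| ≤ B) →
      Tendsto (fun t => ∫ x : ℝ, ν x * u t x * φ x) (𝓝[>] 0) (𝓝 (φ y)))
    {s W : ℝ} (hs : 0 < s) (hW : 0 ≤ W) :
    ∃ τ > 0, ∀ t ∈ Ioo 0 τ, ∀ p q, p ≤ q → prim ν p - prim ν y - W * t < -s →
      s < prim ν q - prim ν y - W * t → 1 - s ≤ mass ν u t p q := by
  have hN := prim_continuous hν
  have hNm := prim_strictMono hν hν0
  set φ : ℝ → ℝ := fun x => max 0 (1 - (2 / s) * |prim ν x - prim ν y|) with hφ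
  have hφc : Continuous φ := by fun_prop
  have hφ0 : ∀ x, 0 ≤ φ x := fun x => le_max_left _ _
  have hφ1 : ∀ x, φ x ≤ 1 := fun x => by
    apply max_le zero_le_one
    have : 0 ≤ (2 / s) * |prim ν x - prim ν y| := by positivity
    linarith
  have hφz : ∀ x, s / 2 ≤ |prim ν x - prim ν y| → φ x = 0 := by
    intro x hx
    apply max_eq_left
    have : (2 / s) * (s / 2) ≤ (2 / s) * |prim ν x - prim ν y| :=
      mul_le_mul_of_nonneg_left hx (by positivity)
    have h2 : (2 / s) * (s / 2) = 1 := by field_simp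
    linarith
  have hlim := hw φ hφc ⟨1, fun x => by rw [abs_of_nonneg (hφ0 x)]; exact hφ1 x⟩
  have hφy : φ y = 1 := by simp [hφ]
  rw [hφy] at hlim
  have hev := hlim.eventually (lt_mem_nhds (by linarith : 1 - s < 1))
  obtain ⟨τ, hτ, hτ'⟩ := (mem_nhdsGT_iff_exists_Ioo_subset).1 hev
  have hτ0 : 0 < τ := hτ
  refine ⟨min τ (s / (2 * (W + 1))), lt_min hτ0 (by positivity), ?_⟩
  intro t ht p q hpq hp hq
  have ht1 : t < τ := ht.2.trans_le (min_le_left _ _)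
  have ht2 : t < s / (2 * (W + 1)) := ht.2.trans_le (min_le_right _ _)
  have hWt : W * t ≤ s / 2 := by
    rw [lt_div_iff₀ (by positivity)] at ht2
    nlinarith [ht.1]
  have h1 : 1 - s < ∫ x : ℝ, ν x * u t x * φ x := hτ' ⟨ht.1, ht1⟩
  have hWt0 : 0 ≤ W * t := mul_nonneg hW ht.1.le
  have h2 : ∫ x : ℝ, ν x * u t x * φ x ≤ ∫ x, (Ioc p q).indicator (fun x => ν x * u t x) x := by
    apply integral_mono
    · apply ((hfi t ht.1).mono' ((hfi t ht.1).aestronglyMeasurable.mul hφc.aestronglyMeasurable))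
      refine Eventually.of_forall fun x => ?_
      have h3 : 0 ≤ ν x * u t x := mul_nonneg (hν0 x).le (hu0 t ht.1 x)
      rw [Real.norm_eq_abs]
      show |ν x * u t x * φ x| ≤ ν x * u t x
      rw [abs_of_nonneg (mul_nonneg h3 (hφ0 x))]
      exact mul_le_of_le_one_right h3 (hφ1 x)
    · exact (hfi t ht.1).indicator measurableSet_Ioc
    · intro x
      have h3 : 0 ≤ ν x * u t x := mul_nonneg (hν0 x).le (hu0 t ht.1 x)
      by_cases hx : x ∈ Ioc p q
      · simp only [indicator_of_mem hx]
        exact mul_le_of_le_one_right h3 (hφ1 x)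
      · simp only [indicator_of_notMem hx]
        have hz : φ x = 0 := by
          apply hφz
          rw [mem_Ioc, not_and_or] at hx
          rcases hx with hx | hx
          · have := hNm.monotone (not_lt.1 hx)
            rw [le_abs]; right; linarith
          · have := hNm (not_le.1 hx)
            rw [le_abs]; left; linarith
        rw [hz, mul_zero]
  rw [integral_indicator measurableSet_Ioc, ← intervalIntegral.integral_of_le hpq] at h2
  exact (h1.trans_le h2).le

set_option maxHeartbeats 1600000 in
theorem step_one_aux {ν a : ℝ → ℝ} {W Lam m0 : ℝ} {u : ℝ → ℝ → ℝ} (hν : Continuous ν)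
    (ha : Continuous a) (hm : 0 < m0) (hνm : ∀ x, m0 ≤ ν x)
    (hν0 : ∀ x, 0 < ν x) (ha0 : ∀ x, 0 < a x) (hW : 0 ≤ W) (hLam : 0 < Lam)
    (hAu : ∀ x, ν x ^ 2 * a x ≤ Lam) (sol : IsCanonicalSolOn ν a W u (Ioi 0)) {y : ℝ}
    (hjc : ∀ z : ℝ × ℝ, 0 < z.1 → ContinuousAt (fun z : ℝ × ℝ => u z.1 z.2) z)
    (hu0 : ∀ t, 0 < t → ∀ x, 0 ≤ u t x) (hfi : ∀ t, 0 < t → Integrable (fun x => ν x * u t x))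
    (hw : ∀ φ : ℝ → ℝ, Continuous φ → (∃ B : ℝ, ∀ x, |φ x| ≤ B) →
      Tendsto (fun t => ∫ x : ℝ, ν x * u t x * φ x) (𝓝[>] 0) (𝓝 (φ y)))
    {κ s t p q : ℝ} (hκ : 0 < κ) (hs : 0 < s) (ht : 0 < t) (hpq : p ≤ q) :
    1 - s - Real.exp (-κ * (prim ν q - prim ν y - W * t - s) + κ ^ 2 * (Lam + 1) * t)
      - Real.exp (κ * (prim ν p - prim ν y - W * t + s) + κ ^ 2 * (Lam + 1) * t)
      - s * ((prim ν p - prim ν y - W * t) ^ 2 + (prim ν q - prim ν y - W * t) ^ 2)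
      - 4 * (Lam + 1) * s * t ≤ mass ν u t p q := by
  set n0 := prim ν y with hn0
  obtain ⟨τ, hτ, hstart⟩ := start_mass (y := y) hν hν0 hu0 hfi hw hs hW
  set M := 1 / s + 1 with hMdef
  have hM0 : 0 < M := by positivity
  have hsM : 1 ≤ s * M ^ 2 := by
    have h1 : s * M = 1 + s := by rw [hMdef]; field_simp
    have h2 : 1 ≤ M := by rw [hMdef]; have : 0 < 1 / s := by positivity
                          linarith
    nlinarith
  obtain ⟨a0, ha0p, ha0M⟩ := prim_exists_le hν hm hνm p (n0 - M)
  obtain ⟨b0, hb0q, hb0M⟩ := prim_exists_ge hν hm hνm q (n0 + W * t + M)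
  set τ1 := min τ t / 2 with hτ1
  have hmin0 : 0 < min τ t := lt_min hτ ht
  have hτ10 : 0 < τ1 := by rw [hτ1]; linarith
  have hτ_lt : τ1 < τ := by have := min_le_left τ t; rw [hτ1]; linarith
  have hτ_le : τ1 ≤ t := by have := min_le_right τ t; rw [hτ1]; linarith
  set E2 : ℝ → ℝ → ℝ := fun t z2 =>
    Real.exp (-κ * (z2 - n0 - W * t - s) + κ ^ 2 * (Lam + 1) * t) with hE2
  set E1 : ℝ → ℝ → ℝ := fun t z1 =>
    Real.exp (κ * (z1 - n0 - W * t + s) + κ ^ 2 * (Lam + 1) * t) with hE1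
  have hE2t : ∀ t z, HasDerivAt (fun t => E2 t z) (E2 t z * (κ * W + κ ^ 2 * (Lam + 1))) t :=
    fun t z => (hasDerivAt_quad (-κ * (z - n0 - s)) (κ * W + κ ^ 2 * (Lam + 1)) 0
      (fun t => by ring) (by ring)).exp
  have hE1t : ∀ t z, HasDerivAt (fun t => E1 t z) (E1 t z * (-(κ * W) + κ ^ 2 * (Lam + 1))) t :=
    fun t z => (hasDerivAt_quad (κ * (z - n0 + s)) (-(κ * W) + κ ^ 2 * (Lam + 1)) 0
      (fun t => by ring) (by ring)).exp
  have hE2z : ∀ t z, HasDerivAt (fun z => E2 t z) (E2 t z * (-κ)) z :=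
    fun t z => (hasDerivAt_quad (-κ * (- n0 - W * t - s) + κ ^ 2 * (Lam + 1) * t) (-κ) 0
      (fun t => by ring) (by ring)).exp
  have hE1z : ∀ t z, HasDerivAt (fun z => E1 t z) (E1 t z * κ) z :=
    fun t z => (hasDerivAt_quad (κ * (- n0 - W * t + s) + κ ^ 2 * (Lam + 1) * t) κ 0
      (fun t => by ring) (by ring)).exp
  have hE1p : ∀ t z, 0 < E1 t z := fun t z => Real.exp_pos _
  have hE2p : ∀ t z, 0 < E2 t z := fun t z => Real.exp_pos _
  have hL1 : 0 < Lam + 1 := by linarith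
  have hE1c : Continuous fun z : ℝ × ℝ => E1 z.1 z.2 := by simp only [hE1]; fun_prop
  have hE2c : Continuous fun z : ℝ × ℝ => E2 z.1 z.2 := by simp only [hE2]; fun_prop
  -- exponentials at least one
  have hE2one : ∀ t, 0 ≤ t → ∀ z, z - n0 - W * t ≤ s → 1 ≤ E2 t z := by
    intro t ht z hz
    apply Real.one_le_exp
    have h1 : 0 ≤ κ * (s - (z - n0 - W * t)) := mul_nonneg hκ.le (by linarith)
    have h2 : 0 ≤ κ ^ 2 * (Lam + 1) * t := by positivity
    linarith
  have hE1one : ∀ t, 0 ≤ t → ∀ z, -s ≤ z - n0 - W * t → 1 ≤ E1 t z := by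
    intro t ht z hz
    apply Real.one_le_exp
    have h1 : 0 ≤ κ * (z - n0 - W * t + s) := mul_nonneg hκ.le (by linarith)
    have h2 : 0 ≤ κ ^ 2 * (Lam + 1) * t := by positivity
    linarith
  set B : ℝ → ℝ → ℝ → ℝ := fun t z1 z2 => 1 - s - E2 t z2 - E1 t z1
    - s * ((z1 - n0 - W * t) ^ 2 + (z2 - n0 - W * t) ^ 2) - 4 * (Lam + 1) * s * t with hB
  have hBc : Continuous fun z : ℝ × ℝ × ℝ => B z.1 z.2.1 z.2.2 := by
    have h1 : Continuous fun z : ℝ × ℝ × ℝ => E2 z.1 z.2.2 :=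
      hE2c.comp (by fun_prop : Continuous fun z : ℝ × ℝ × ℝ => (z.1, z.2.2))
    have h2 : Continuous fun z : ℝ × ℝ × ℝ => E1 z.1 z.2.1 :=
      hE1c.comp (by fun_prop : Continuous fun z : ℝ × ℝ × ℝ => (z.1, z.2.1))
    simp only [hB]
    fun_prop
  -- B is nonpositive in several situations
  have hBneg : ∀ t, 0 ≤ t → ∀ z1 z2, (z2 - n0 - W * t ≤ s ∨ -s ≤ z1 - n0 - W * t ∨
      1 ≤ s * ((z1 - n0 - W * t) ^ 2 + (z2 - n0 - W * t) ^ 2)) → B t z1 z2 ≤ 0 := by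
    intro t ht z1 z2 h
    have e1 := hE1p t z1
    have e2 := hE2p t z2
    have e3 : 0 ≤ s * ((z1 - n0 - W * t) ^ 2 + (z2 - n0 - W * t) ^ 2) := by positivity
    have e4 : 0 ≤ 4 * (Lam + 1) * s * t := by positivity
    simp only [hB]
    rcases h with h | h | h
    · have := hE2one t ht z2 h; linarith
    · have := hE1one t ht z1 h; linarith
    · linarith
  have hcomp := comparison (u := u) hν ha hν0 ha0 hW sol (τ0 := τ1 / 2) (τ1 := τ1) (τ2 := t)
    (τ3 := t + 1) (a0 := a0) (b0 := b0) (by linarith) (by linarith) hτ_le (by linarith)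
    (by linarith)
    (fun z hz => (hjc z (by linarith [hz.1.1])).continuousWithinAt)
    (B := B)
    (Bt := fun t z1 z2 => -(E2 t z2 * (κ * W + κ ^ 2 * (Lam + 1))) -
      E1 t z1 * (-(κ * W) + κ ^ 2 * (Lam + 1)) +
      2 * s * W * ((z1 - n0 - W * t) + (z2 - n0 - W * t)) - 4 * (Lam + 1) * s)
    (B1 := fun t z1 z2 => -(E1 t z1 * κ) - 2 * s * (z1 - n0 - W * t))
    (B2 := fun t z1 z2 => E2 t z2 * κ - 2 * s * (z2 - n0 - W * t))
    (B11 := fun t z1 z2 => -(E1 t z1 * κ * κ) - 2 * s)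
    (B22 := fun t z1 z2 => -(E2 t z2 * κ * κ) - 2 * s)
    hBc ?_ ?_ ?_ ?_ ?_ ?_ ?_ ?_ ?_ ?_
  · exact hcomp t ⟨hτ_le, le_rfl⟩ p q ha0p.le hpq hb0q.le
  · intro t z1 z2
    have hq : HasDerivAt (fun t => 1 - s - s * ((z1 - n0 - W * t) ^ 2 + (z2 - n0 - W * t) ^ 2)
        - 4 * (Lam + 1) * s * t)
        (2 * s * W * ((z1 - n0 - W * t) + (z2 - n0 - W * t)) - 4 * (Lam + 1) * s) t :=
      hasDerivAt_quad (1 - s - s * ((z1 - n0) ^ 2 + (z2 - n0) ^ 2))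
        (2 * s * W * ((z1 - n0) + (z2 - n0)) - 4 * (Lam + 1) * s) (-(2 * s * W ^ 2))
        (fun t => by ring) (by ring)
    have h := (hq.sub (hE2t t z2)).sub (hE1t t z1)
    refine (h.congr_of_eventuallyEq (Eventually.of_forall fun t => ?_)).congr_deriv ?_
    · simp only [hB, Pi.sub_apply]; ring
    · ring
  · intro t z1 z2
    have hq : HasDerivAt (fun z1 => 1 - s - E2 t z2
        - s * ((z1 - n0 - W * t) ^ 2 + (z2 - n0 - W * t) ^ 2)
        - 4 * (Lam + 1) * s * t)
        (- (2 * s * (z1 - n0 - W * t))) z1 :=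
      hasDerivAt_quad (1 - s - E2 t z2 - s * ((- n0 - W * t) ^ 2 + (z2 - n0 - W * t) ^ 2)
        - 4 * (Lam + 1) * s * t)
        (-(2 * s * (- n0 - W * t))) (-s)
        (fun t => by ring) (by ring)
    have h := hq.sub (hE1z t z1)
    refine (h.congr_of_eventuallyEq (Eventually.of_forall fun t => ?_)).congr_deriv ?_
    · simp only [hB, Pi.sub_apply]; ring
    · ring
  · intro t z1 z2
    have hq : HasDerivAt (fun z2 => 1 - s - E1 t z1
        - s * ((z1 - n0 - W * t) ^ 2 + (z2 - n0 - W * t) ^ 2)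
        - 4 * (Lam + 1) * s * t)
        (- (2 * s * (z2 - n0 - W * t))) z2 :=
      hasDerivAt_quad (1 - s - E1 t z1 - s * ((z1 - n0 - W * t) ^ 2 + (- n0 - W * t) ^ 2)
        - 4 * (Lam + 1) * s * t)
        (-(2 * s * (- n0 - W * t))) (-s)
        (fun t => by ring) (by ring)
    have h := hq.sub (hE2z t z2)
    refine (h.congr_of_eventuallyEq (Eventually.of_forall fun t => ?_)).congr_deriv ?_
    · simp only [hB, Pi.sub_apply]; ring
    · ring
  · intro t z1 z2
    have hq : HasDerivAt (fun z1 => - (2 * s * (z1 - n0 - W * t))) (-(2 * s)) z1 :=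
      hasDerivAt_quad (- (2 * s * (- n0 - W * t))) (-(2 * s)) 0 (fun t => by ring) (by ring)
    have h := hq.sub ((hE1z t z1).mul_const κ)
    refine (h.congr_of_eventuallyEq (Eventually.of_forall fun t => ?_)).congr_deriv ?_
    · simp only [Pi.sub_apply]; ring
    · ring
  · intro t z1 z2
    have hq : HasDerivAt (fun z1 => - (2 * s * (z1 - n0 - W * t))) (-(2 * s)) z2 :=
      hasDerivAt_quad (- (2 * s * (- n0 - W * t))) (-(2 * s)) 0 (fun t => by ring) (by ring)
    have h := hq.add ((hE2z t z2).mul_const κ)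
    refine (h.congr_of_eventuallyEq (Eventually.of_forall fun t => ?_)).congr_deriv ?_
    · simp only [Pi.add_apply]; ring
    · ring
  · intro p q hp hpq hq
    by_cases h1 : prim ν q - n0 - W * τ1 ≤ s
    · exact (hBneg τ1 hτ10.le _ _ (Or.inl h1)).trans (mass_nonneg hν0 (hu0 τ1 hτ10) hpq)
    by_cases h2 : -s ≤ prim ν p - n0 - W * τ1
    · exact (hBneg τ1 hτ10.le _ _ (Or.inr (Or.inl h2))).trans (mass_nonneg hν0 (hu0 τ1 hτ10) hpq)
    push Not at h1 h2
    refine le_trans ?_ (hstart τ1 ⟨hτ10, hτ_lt⟩ p q hpq h2 h1)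
    have e1 := hE1p τ1 (prim ν p)
    have e2 := hE2p τ1 (prim ν q)
    have e3 : 0 ≤ s * ((prim ν p - n0 - W * τ1) ^ 2 + (prim ν q - n0 - W * τ1) ^ 2) := by positivity
    have e4 : 0 ≤ 4 * (Lam + 1) * s * τ1 := by positivity
    simp only [hB]; linarith
  · intro t ht p hp
    apply hBneg t (by linarith [ht.1])
    rcases le_total (prim ν p - n0 - W * t) 0 with h | h
    · left; linarith
    · right; left; linarith
  · intro t' ht' q hq
    left
    have ht0 : 0 < t' := by linarith [ht'.1]
    refine le_trans (hBneg t' ht0.le _ _ (Or.inr (Or.inr ?_)))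
      (mass_nonneg hν0 (hu0 t' ht0) hq.1)
    refine hsM.trans (mul_le_mul_of_nonneg_left ?_ hs.le)
    have : 0 ≤ W * t' := by positivity
    nlinarith [sq_nonneg (prim ν q - n0 - W * t')]
  · intro t' ht' p hp
    left
    have ht0 : 0 < t' := by linarith [ht'.1]
    refine le_trans (hBneg t' ht0.le _ _ (Or.inr (Or.inr ?_)))
      (mass_nonneg hν0 (hu0 t' ht0) hp.2)
    refine hsM.trans (mul_le_mul_of_nonneg_left ?_ hs.le)
    have : W * t' ≤ W * t := mul_le_mul_of_nonneg_left ht'.2 hW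
    nlinarith [sq_nonneg (prim ν p - n0 - W * t')]
  · intro t _ p q hp hpq hq _
    have e1 := hE1p t (prim ν p)
    have e2 := hE2p t (prim ν q)
    have k1 : 0 ≤ E1 t (prim ν p) * κ * κ + 2 * s := by positivity
    have k2 : 0 ≤ E2 t (prim ν q) * κ * κ + 2 * s := by positivity
    have f1 := mul_le_mul_of_nonneg_right (hAu p) k1
    have f2 := mul_le_mul_of_nonneg_right (hAu q) k2
    have f3 : 0 < E1 t (prim ν p) * κ * κ := by positivity
    have f4 : 0 < E2 t (prim ν q) * κ * κ := by positivity
    linear_combination f1 + f2 + f3 + f4 + 4 * hs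

open Set Topology MeasureTheory Filter

theorem step_one {ν a : ℝ → ℝ} {W Lam m0 : ℝ} {u : ℝ → ℝ → ℝ} (hν : Continuous ν)
    (ha : Continuous a) (hm : 0 < m0) (hνm : ∀ x, m0 ≤ ν x)
    (hν0 : ∀ x, 0 < ν x) (ha0 : ∀ x, 0 < a x) (hW : 0 ≤ W) (hLam : 0 < Lam)
    (hAu : ∀ x, ν x ^ 2 * a x ≤ Lam) (sol : IsCanonicalSolOn ν a W u (Ioi 0)) {y : ℝ}
    (hjc : ∀ z : ℝ × ℝ, 0 < z.1 → ContinuousAt (fun z : ℝ × ℝ => u z.1 z.2) z)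
    (hu0 : ∀ t, 0 < t → ∀ x, 0 ≤ u t x) (hfi : ∀ t, 0 < t → Integrable (fun x => ν x * u t x))
    (hw : ∀ φ : ℝ → ℝ, Continuous φ → (∃ B : ℝ, ∀ x, |φ x| ≤ B) →
      Tendsto (fun t => ∫ x : ℝ, ν x * u t x * φ x) (𝓝[>] 0) (𝓝 (φ y)))
    {d t p q : ℝ} (hd : 0 < d) (ht : 0 < t) (htd : t ≤ d ^ 2) (hpq : p ≤ q)
    (hp : prim ν p - prim ν y - W * t ≤ -((Lam + 3) * d))
    (hq : (Lam + 3) * d ≤ prim ν q - prim ν y - W * t) :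
    1 / 2 ≤ mass ν u t p q := by
  set X := prim ν p - prim ν y - W * t with hX
  set Y := prim ν q - prim ν y - W * t with hY
  set f : ℝ → ℝ := fun s => 1 - s - Real.exp (-(1 / d) * (Y - s) + (1 / d) ^ 2 * (Lam + 1) * t)
      - Real.exp ((1 / d) * (X + s) + (1 / d) ^ 2 * (Lam + 1) * t)
      - s * (X ^ 2 + Y ^ 2) - 4 * (Lam + 1) * s * t with hf
  have hfc : Continuous f := by simp only [hf]; fun_prop
  have h1 : Tendsto f (𝓝[>] 0) (𝓝 (f 0)) := (hfc.tendsto 0).mono_left nhdsWithin_le_nhds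
  have h2 : f 0 ≤ mass ν u t p q := by
    apply le_of_tendsto h1
    filter_upwards [self_mem_nhdsWithin] with s hs
    exact step_one_aux hν ha hm hνm hν0 ha0 hW hLam hAu sol hjc hu0 hfi hw
      (by positivity : 0 < 1 / d) hs ht hpq
  refine le_trans ?_ h2
  have e1 : (1 / d) ^ 2 * (Lam + 1) * t ≤ Lam + 1 := by
    have : (1 / d) ^ 2 * (Lam + 1) * t = (Lam + 1) * (t / d ^ 2) := by field_simp
    rw [this]
    have h3 : t / d ^ 2 ≤ 1 := by rw [div_le_one (by positivity)]; exact htd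
    nlinarith
  have e2 : Lam + 3 ≤ (1 / d) * Y := by
    rw [one_div, inv_mul_eq_div, le_div_iff₀ hd]; exact hq
  have e3 : (1 / d) * X ≤ -(Lam + 3) := by
    rw [one_div, inv_mul_eq_div, div_le_iff₀ hd]; linarith
  have e4 : Real.exp (-2) ≤ 1 / 4 := by
    rw [Real.exp_neg, one_div]
    apply inv_anti₀ (by norm_num)
    have h5 := Real.add_one_le_exp (1 : ℝ)
    have : Real.exp 2 = Real.exp 1 * Real.exp 1 := by rw [← Real.exp_add]; norm_num
    rw [this]; nlinarith
  have e5 : Real.exp (-(1 / d) * (Y - 0) + (1 / d) ^ 2 * (Lam + 1) * t) ≤ Real.exp (-2) :=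
    Real.exp_le_exp.2 (by linarith)
  have e6 : Real.exp ((1 / d) * (X + 0) + (1 / d) ^ 2 * (Lam + 1) * t) ≤ Real.exp (-2) :=
    Real.exp_le_exp.2 (by linarith)
  simp only [hf]
  linarith

set_option maxHeartbeats 1600000 in
theorem step_two {ν a : ℝ → ℝ} {W lam Lam m0 r' : ℝ} {u : ℝ → ℝ → ℝ} (hν : Continuous ν)
    (ha : Continuous a) (hm : 0 < m0) (hνm : ∀ x, m0 ≤ ν x)
    (hν0 : ∀ x, 0 < ν x) (ha0 : ∀ x, 0 < a x) (hW : 0 ≤ W) (hLam : 0 < Lam) (hlam : 0 < lam)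
    (hAl : ∀ x, lam ≤ ν x ^ 2 * a x)
    (hAu : ∀ x, ν x ^ 2 * a x ≤ Lam) (sol : IsCanonicalSolOn ν a W u (Ioi 0)) {y : ℝ}
    (hjc : ∀ z : ℝ × ℝ, 0 < z.1 → ContinuousAt (fun z : ℝ × ℝ => u z.1 z.2) z)
    (hu0 : ∀ t, 0 < t → ∀ x, 0 ≤ u t x) (hfi : ∀ t, 0 < t → Integrable (fun x => ν x * u t x))
    (hw : ∀ φ : ℝ → ℝ, Continuous φ → (∃ B : ℝ, ∀ x, |φ x| ≤ B) →
      Tendsto (fun t => ∫ x : ℝ, ν x * u t x * φ x) (𝓝[>] 0) (𝓝 (φ y)))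
    {d x L0 α0 : ℝ} (hd : 0 < d) (hr : 0 < r') (hL0 : L0 = Lam + 4 + r')
    (hα0 : α0 = (4 * L0 ^ 2 + 4 * Lam) / (4 * lam) + 1)
    (hZ : |prim ν x - prim ν y - W * d ^ 2| ≤ r' * d) :
    α0 * L0 * Real.exp (-(2 * α0 * L0 ^ 2)) / d ≤ u (d ^ 2) x := by
  have hL0p : 0 < L0 := by rw [hL0]; positivity
  have hα_pos0 : 0 < α0 := by rw [hα0]; positivity
  have hαlam : 2 * L0 ^ 2 + 2 * Lam < 2 * α0 * lam := by
    have : 2 * α0 * lam = 2 * L0 ^ 2 + 2 * Lam + 2 * lam := by rw [hα0]; field_simp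
    linarith
  set T := d ^ 2 with hT
  have hTp : 0 < T := by positivity
  set n := prim ν x with hn
  set L := L0 * d with hL
  have hLp : 0 < L := by positivity
  set α := α0 / d ^ 2 with hα
  have hαp : 0 < α := by positivity
  have hαT : α * T = α0 := by rw [hα, hT]; field_simp
  have hαL : α * L ^ 2 = α0 * L0 ^ 2 := by rw [hα, hL]; field_simp
  set σ := 4 * L0 ^ 2 with hσ
  have hσT : σ * T = 4 * L ^ 2 := by rw [hσ, hT, hL]; ring
  have hσp : 0 < σ := by positivity
  obtain ⟨a0, ha0x, ha0M⟩ := prim_exists_le hν hm hνm x (n - W * T - 3 * L)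
  obtain ⟨b0, hb0x, hb0M⟩ := prim_exists_ge hν hm hνm x (n + 3 * L)
  set G : ℝ → ℝ → ℝ → ℝ := fun t z1 z2 => Real.exp (-α * ((z1 - n + W * (T - t) + L) ^ 2 +
    (z2 - n + W * (T - t) - L) ^ 2 + σ * (T - t))) with hG
  have hGp : ∀ t z1 z2, 0 < G t z1 z2 := fun t z1 z2 => Real.exp_pos _
  have hGc : Continuous fun z : ℝ × ℝ × ℝ => G z.1 z.2.1 z.2.2 := by
    simp only [hG]; fun_prop
  have hGt : ∀ t z1 z2, HasDerivAt (fun t => G t z1 z2) (G t z1 z2 *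
      (α * (2 * W * ((z1 - n + W * (T - t) + L) + (z2 - n + W * (T - t) - L)) + σ))) t :=
    fun t z1 z2 => (hasDerivAt_quad (-α * ((z1 - n + W * T + L) ^ 2 +
      (z2 - n + W * T - L) ^ 2 + σ * T))
      (α * (2 * W * ((z1 - n + W * T + L) + (z2 - n + W * T - L)) + σ)) (-α * (2 * W ^ 2))
      (fun t => by ring) (by ring)).exp
  have hG1 : ∀ t z1 z2, HasDerivAt (fun z => G t z z2) (G t z1 z2 *
      (-α * (2 * (z1 - n + W * (T - t) + L)))) z1 :=
    fun t z1 z2 => (hasDerivAt_quad (-α * ((- n + W * (T - t) + L) ^ 2 +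
      (z2 - n + W * (T - t) - L) ^ 2 + σ * (T - t)))
      (-α * (2 * (- n + W * (T - t) + L))) (-α)
      (fun t => by ring) (by ring)).exp
  have hG2 : ∀ t z1 z2, HasDerivAt (fun z => G t z1 z) (G t z1 z2 *
      (-α * (2 * (z2 - n + W * (T - t) - L)))) z2 :=
    fun t z1 z2 => (hasDerivAt_quad (-α * ((z1 - n + W * (T - t) + L) ^ 2 +
      (- n + W * (T - t) - L) ^ 2 + σ * (T - t)))
      (-α * (2 * (- n + W * (T - t) - L))) (-α)
      (fun t => by ring) (by ring)).exp
  set c0 := Real.exp (-(2 * α * L ^ 2)) with hc0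
  have hc0p : 0 < c0 := Real.exp_pos _
  set B : ℝ → ℝ → ℝ → ℝ := fun t z1 z2 => (1 / 2) * (G t z1 z2 - c0) with hB
  have hBc : Continuous fun z : ℝ × ℝ × ℝ => B z.1 z.2.1 z.2.2 := by
    simp only [hB]; fun_prop
  have hBneg : ∀ t z1 z2, 2 * L ^ 2 ≤ (z1 - n + W * (T - t) + L) ^ 2 +
      (z2 - n + W * (T - t) - L) ^ 2 + σ * (T - t) → B t z1 z2 ≤ 0 := by
    intro t z1 z2 h
    have : G t z1 z2 ≤ c0 := by
      apply Real.exp_le_exp.2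
      nlinarith
    simp only [hB]; linarith
  have hcomp := comparison (u := u) hν ha hν0 ha0 hW sol (τ0 := T / 4) (τ1 := T / 2) (τ2 := T)
    (τ3 := T + 1) (a0 := a0) (b0 := b0) (by linarith) (by linarith) (by linarith) (by linarith)
    (by linarith)
    (fun z hz => (hjc z (by linarith [hz.1.1])).continuousWithinAt)
    (B := B)
    (Bt := fun t z1 z2 => (1 / 2) * (G t z1 z2 *
      (α * (2 * W * ((z1 - n + W * (T - t) + L) + (z2 - n + W * (T - t) - L)) + σ))))
    (B1 := fun t z1 z2 => (1 / 2) * (G t z1 z2 * (-α * (2 * (z1 - n + W * (T - t) + L)))))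
    (B2 := fun t z1 z2 => (1 / 2) * (G t z1 z2 * (-α * (2 * (z2 - n + W * (T - t) - L)))))
    (B11 := fun t z1 z2 => G t z1 z2 * (-α + 2 * α ^ 2 * (z1 - n + W * (T - t) + L) ^ 2))
    (B22 := fun t z1 z2 => G t z1 z2 * (-α + 2 * α ^ 2 * (z2 - n + W * (T - t) - L) ^ 2))
    hBc ?_ ?_ ?_ ?_ ?_ ?_ ?_ ?_ ?_ ?_
  · have hc' : α0 * L0 * Real.exp (-(2 * α0 * L0 ^ 2)) / d = c0 * (α * L) := by
      rw [hc0, show 2 * α * L ^ 2 = 2 * α0 * L0 ^ 2 by linarith, hα, hL]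
      field_simp
    rw [hc']
    have hx0 : G T n n = c0 := by
      simp only [hG, hc0]; congr 1; ring
    refine ge_of_mass (b := b0) hν hν0 (sol_contx sol hTp) hb0x
      (G := fun z => B T n z) ?_ ?_ ?_
    · have h := ((hG2 T n n).sub_const c0).const_mul (1 / 2 : ℝ)
      refine h.congr_deriv ?_
      rw [hx0]; ring
    · simp only [hB]
      rw [hx0]; ring
    · intro q hq
      exact hcomp T ⟨by linarith, le_rfl⟩ x q ha0x.le hq.1.le hq.2.le
  · intro t z1 z2
    exact ((hGt t z1 z2).sub_const c0).const_mul (1 / 2 : ℝ)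
  · intro t z1 z2
    exact ((hG1 t z1 z2).sub_const c0).const_mul (1 / 2 : ℝ)
  · intro t z1 z2
    exact ((hG2 t z1 z2).sub_const c0).const_mul (1 / 2 : ℝ)
  · intro t z1 z2
    have hq : HasDerivAt (fun z => -α * (2 * (z - n + W * (T - t) + L))) (-α * 2) z1 :=
      hasDerivAt_quad (-α * (2 * (- n + W * (T - t) + L))) (-α * 2) 0
        (fun t => by ring) (by ring)
    exact (((hG1 t z1 z2).mul hq).const_mul (1 / 2 : ℝ)).congr_deriv (by ring)
  · intro t z1 z2
    have hq : HasDerivAt (fun z => -α * (2 * (z - n + W * (T - t) - L))) (-α * 2) z2 :=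
      hasDerivAt_quad (-α * (2 * (- n + W * (T - t) - L))) (-α * 2) 0
        (fun t => by ring) (by ring)
    exact (((hG2 t z1 z2).mul hq).const_mul (1 / 2 : ℝ)).congr_deriv (by ring)
  · intro p q hp hpq hq
    refine (hBneg _ _ _ ?_).trans (mass_nonneg hν0 (hu0 _ (by linarith)) hpq)
    have : σ * (T - T / 2) = 2 * L ^ 2 := by linarith
    rw [this]
    have := sq_nonneg (prim ν p - n + W * (T - T / 2) + L)
    have := sq_nonneg (prim ν q - n + W * (T - T / 2) - L)
    linarith
  · intro t ht p hp
    apply hBneg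
    have : 0 ≤ σ * (T - t) := mul_nonneg hσp.le (by linarith [ht.2])
    have := sq_nonneg (prim ν p - n + W * (T - t))
    linarith
  · intro t ht q hq
    left
    refine (hBneg _ _ _ ?_).trans (mass_nonneg hν0 (hu0 _ (by linarith [ht.1])) hq.1)
    have h1 : 0 ≤ σ * (T - t) := mul_nonneg hσp.le (by linarith [ht.2])
    have h2 : 0 ≤ W * t := mul_nonneg hW (by linarith [ht.1])
    have h3 : prim ν a0 - n + W * (T - t) + L ≤ - (2 * L) := by linarith
    have := sq_nonneg (prim ν q - n + W * (T - t) - L)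
    nlinarith
  · intro t ht p hp
    left
    refine (hBneg _ _ _ ?_).trans (mass_nonneg hν0 (hu0 _ (by linarith [ht.1])) hp.2)
    have h1 : 0 ≤ σ * (T - t) := mul_nonneg hσp.le (by linarith [ht.2])
    have h2 : 0 ≤ W * (T - t) := mul_nonneg hW (by linarith [ht.2])
    have h3 : 2 * L ≤ prim ν b0 - n + W * (T - t) - L := by linarith
    have := sq_nonneg (prim ν p - n + W * (T - t) + L)
    nlinarith
  · intro t ht p q hp hpq hq hlt
    have ht0 : 0 < t := by linarith [ht.1]
    set U := prim ν p - n + W * (T - t) + L with hU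
    set V := prim ν q - n + W * (T - t) - L with hV
    have hout : d ^ 2 ≤ U ^ 2 + V ^ 2 := by
      by_contra hin
      push Not at hin
      have hU1 : U ≤ d := by
        nlinarith
      have hV1 : -d ≤ V := by
        nlinarith
      have hZ1 := (abs_le.1 hZ).1
      have hZ2 := (abs_le.1 hZ).2
      have h5 : L = (Lam + 3) * d + d + r' * d := by rw [hL, hL0]; ring
      have hmass := step_one hν ha hm hνm hν0 ha0 hW hLam hAu sol hjc hu0 hfi hw (y := y)
        hd ht0 ht.2 hpq.le (by linarith) (by linarith)
      have hG1 : G t (prim ν p) (prim ν q) ≤ 1 := by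
        apply Real.exp_le_one_iff.2
        have h1 : 0 ≤ σ * (T - t) := mul_nonneg hσp.le (by linarith [ht.2])
        have : 0 ≤ α * (U ^ 2 + V ^ 2 + σ * (T - t)) := by positivity
        linarith
      simp only [hB] at hlt
      linarith
    have hg := hGp t (prim ν p) (prim ν q)
    set g := G t (prim ν p) (prim ν q) with hgdef
    have hAl1 := hAl p
    have hAl2 := hAl q
    have hAu1 := hAu p
    have hAu2 := hAu q
    set A1 := ν p ^ 2 * a p with hA1
    set A2 := ν q ^ 2 * a q with hA2
    have key : σ / 2 < A2 * (-1 + 2 * α * V ^ 2) + A1 * (-1 + 2 * α * U ^ 2) := by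
      have i1 : lam * (2 * α * V ^ 2) ≤ A2 * (2 * α * V ^ 2) :=
        mul_le_mul_of_nonneg_right hAl2 (by positivity)
      have i2 : lam * (2 * α * U ^ 2) ≤ A1 * (2 * α * U ^ 2) :=
        mul_le_mul_of_nonneg_right hAl1 (by positivity)
      have i3 : 2 * lam * α * d ^ 2 ≤ 2 * lam * α * (U ^ 2 + V ^ 2) :=
        mul_le_mul_of_nonneg_left hout (by positivity)
      have i4 : 2 * lam * α * d ^ 2 = 2 * α0 * lam := by rw [← hαT]; ring
      linarith
    have key2 := mul_lt_mul_of_pos_left key (mul_pos hg hαp)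
    linear_combination key2

open Set Topology MeasureTheory Filter

theorem corrector_reduction {μ r W : ℝ} (hμ : 1 ≤ μ) (hr : 0 < r) {ν a T : ℝ → ℝ}
    (hν : Continuous ν) (hνE : Elliptic μ ν) (haE : Elliptic μ a) (hW : 0 ≤ W)
    (hT : IsCorrector μ ν a W T) {d x y : ℝ} (hd : 0 < d)
    (h : |T x - T y - W * d ^ 2| ≤ r * d) :
    |prim ν x - prim ν y - W * d ^ 2| ≤ (r + μ ^ 7 + μ ^ 6 * (r + 1) + 1) * d := by
  obtain ⟨-, T', hT1, hT2, hT3⟩ := hT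
  have hμ0 : 0 < μ := by linarith
  have hI0 : 0 < 1 / μ := by positivity
  have hI5 : 0 < 1 / μ ^ 5 := by positivity
  have hν0 : ∀ x, 0 < ν x := fun x => hI0.trans_le (hνE x).1
  have ha0 : ∀ x, 0 < a x := fun x => hI0.trans_le (haE x).1
  have hT0 : ∀ x, 0 < T' x := fun x => hI5.trans_le (hT3 x).1
  -- the flux identity
  have hconst : ∀ z w, (a z * ν z * T' z - W * (T z - prim ν z)) =
      (a w * ν w * T' w - W * (T w - prim ν w)) := by
    have hd : ∀ z, HasDerivAt (fun z => a z * ν z * T' z - W * (T z - prim ν z)) 0 z := fun z =>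
      ((hT2 z).sub (((hT1 z).sub (prim_hasDerivAt hν z)).const_mul W)).congr_deriv (by ring)
    exact is_const_of_deriv_eq_zero (fun z => (hd z).differentiableAt) (fun z => (hd z).deriv)
  have hflux0 : ∀ z, 0 < a z * ν z * T' z := fun z =>
    mul_pos (mul_pos (ha0 z) (hν0 z)) (hT0 z)
  have hflux : ∀ z, a z * ν z * T' z ≤ μ ^ 7 := by
    intro z
    have h1 : a z * ν z ≤ μ * μ :=
      mul_le_mul (haE z).2 (hνE z).2 (hν0 z).le hμ0.le
    have h2 : a z * ν z * T' z ≤ (μ * μ) * μ ^ 5 :=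
      mul_le_mul h1 (hT3 z).2 (hT0 z).le (by positivity)
    calc _ ≤ _ := h2
      _ = μ ^ 7 := by ring
  have hWd : |W * ((T x - T y) - (prim ν x - prim ν y))| ≤ μ ^ 7 := by
    have e := hconst x y
    have : W * ((T x - T y) - (prim ν x - prim ν y)) = a x * ν x * T' x - a y * ν y * T' y := by
      linarith
    rw [this, abs_le]
    constructor <;> linarith [hflux x, hflux y, hflux0 x, hflux0 y]
  rw [abs_le] at h
  have hμ7 : 0 < μ ^ 7 := by positivity
  have hμ6 : 0 < μ ^ 6 * (r + 1) := by positivity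
  rcases le_or_gt 1 (W * d) with hc | hc
  · -- large drift
    have hWp : 0 < W := by
      rcases hW.eq_or_lt with h0 | h0
      · rw [← h0] at hc; linarith
      · exact h0
    have h1 : |(T x - T y) - (prim ν x - prim ν y)| ≤ μ ^ 7 * d := by
      rw [abs_mul, abs_of_pos hWp] at hWd
      have h2 : |(T x - T y) - (prim ν x - prim ν y)| * 1 ≤
          |(T x - T y) - (prim ν x - prim ν y)| * (W * d) :=
        mul_le_mul_of_nonneg_left hc (abs_nonneg _)
      have h3 := mul_le_mul_of_nonneg_right hWd hd.le
      linarith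
    rw [abs_le] at h1 ⊢
    have := mul_pos hμ6 hd
    constructor <;> linarith
  · -- small drift
    have hWd2 : W * d ^ 2 ≤ d := by nlinarith
    have hWd0 : 0 ≤ W * d ^ 2 := by positivity
    have hTxy : |T x - T y| ≤ (r + 1) * d := by
      rw [abs_le]; constructor <;> linarith
    have hmain : ∀ x y : ℝ, y ≤ x → T x - T y ≤ (r + 1) * d →
        prim ν x - prim ν y ≤ μ ^ 6 * ((r + 1) * d) ∧ 0 ≤ prim ν x - prim ν y := by
      intro x y hyx hxy
      -- μ^6 T - prim is monotone
      have hm : Monotone (fun z => μ ^ 6 * T z - prim ν z) := by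
        have hd : ∀ z, HasDerivAt (fun z => μ ^ 6 * T z - prim ν z) (μ ^ 6 * T' z - ν z) z :=
          fun z => ((hT1 z).const_mul _).sub (prim_hasDerivAt hν z)
        apply monotone_of_deriv_nonneg (fun z => (hd z).differentiableAt)
        intro z
        rw [(hd z).deriv]
        have h1 : μ ^ 6 * (1 / μ ^ 5) ≤ μ ^ 6 * T' z :=
          mul_le_mul_of_nonneg_left (hT3 z).1 (by positivity)
        have h2 : μ ^ 6 * (1 / μ ^ 5) = μ := by field_simp
        linarith [(hνE z).2]
      have h1 := hm hyx
      have h2 := (prim_strictMono hν hν0).monotone hyx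
      simp only at h1
      have h3 := mul_le_mul_of_nonneg_left hxy (by positivity : 0 ≤ μ ^ 6)
      constructor <;> linarith
    have hN : |prim ν x - prim ν y| ≤ μ ^ 6 * ((r + 1) * d) := by
      rw [abs_le] at hTxy
      have hnn : 0 ≤ μ ^ 6 * ((r + 1) * d) := by positivity
      rcases le_total y x with hyx | hyx
      · have := hmain x y hyx hTxy.2
        rw [abs_le]; constructor <;> linarith
      · have := hmain y x hyx (by linarith)
        rw [abs_le]; constructor <;> linarith
    rw [abs_le] at hN ⊢
    have := mul_pos hμ7 hd
    have := mul_pos hr hd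
    constructor <;> linarith

theorem near_diagonal_lower_bound (μ : ℝ) (hμ : 1 ≤ μ) (r : ℝ) (hr : 0 < r) :
    ∃ C : ℝ, 0 < C ∧ ∀ ν a : ℝ → ℝ, Continuous ν → Continuous a →
      Elliptic μ ν → Elliptic μ a →
      ∀ W : ℝ, 0 ≤ W →
      ∀ T : ℝ → ℝ, IsCorrector μ ν a W T →
      ∀ P : ℝ → ℝ → ℝ → ℝ, IsFundSol ν a W P →
      ∀ t : ℝ, 0 < t → ∀ x y : ℝ,
        |T x - T y - W * t| ≤ r * Real.sqrt t →
        1 / (C * Real.sqrt t) ≤ P t x y := by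
  have hμ0 : 0 < μ := by linarith
  have hI0 : 0 < 1 / μ := by positivity
  obtain ⟨r', hr'⟩ : ∃ r', r' = r + μ ^ 7 + μ ^ 6 * (r + 1) + 1 := ⟨_, rfl⟩
  have hr'p : 0 < r' := by rw [hr']; positivity
  obtain ⟨L0, hL0⟩ : ∃ L0, L0 = μ ^ 3 + 4 + r' := ⟨_, rfl⟩
  obtain ⟨α0, hα0⟩ : ∃ α0, α0 = (4 * L0 ^ 2 + 4 * μ ^ 3) / (4 * (1 / μ) ^ 3) + 1 := ⟨_, rfl⟩
  have hL0p : 0 < L0 := by rw [hL0]; positivity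
  have hα_pos0 : 0 < α0 := by rw [hα0]; positivity
  have hcp : 0 < α0 * L0 * Real.exp (-(2 * α0 * L0 ^ 2)) := by positivity
  refine ⟨1 / (α0 * L0 * Real.exp (-(2 * α0 * L0 ^ 2))), by positivity, ?_⟩
  intro ν a hν ha hνE haE W hW T hT P hP t ht x y h
  obtain ⟨hsol, hpos, hone, hweak, -⟩ := hP
  have hν0 : ∀ x, 0 < ν x := fun x => hI0.trans_le (hνE x).1
  have ha0 : ∀ x, 0 < a x := fun x => hI0.trans_le (haE x).1
  have hAl : ∀ x, (1 / μ) ^ 3 ≤ ν x ^ 2 * a x := by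
    intro x
    have h1 : (1 / μ) ^ 2 ≤ ν x ^ 2 := pow_le_pow_left₀ hI0.le (hνE x).1 2
    calc (1 / μ) ^ 3 = (1 / μ) ^ 2 * (1 / μ) := by ring
      _ ≤ _ := mul_le_mul h1 (haE x).1 hI0.le (by positivity)
  have hAu : ∀ x, ν x ^ 2 * a x ≤ μ ^ 3 := by
    intro x
    have h1 : ν x ^ 2 ≤ μ ^ 2 := pow_le_pow_left₀ (hν0 x).le (hνE x).2 2
    calc _ ≤ μ ^ 2 * μ := mul_le_mul h1 (haE x).2 (ha0 x).le (by positivity)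
      _ = μ ^ 3 := by ring
  have hfi : ∀ t, 0 < t → Integrable (fun x => ν x * P t x y) := by
    intro t ht
    by_contra hni
    have := hone y t ht
    rw [integral_undef hni] at this
    exact zero_ne_one this
  have hM : MassCont ν (fun t x => P t x y) := by
    intro α β hα η hη
    obtain ⟨δ, hδ, hδ'⟩ := scheffe_unif (f := fun t x => ν x * P t x y)
      (fun t ht x => mul_nonneg (hν0 x).le (hpos y t ht x)) hfi (hone y)
      (fun t ht x => continuousAt_const.mul (sol_contt (hsol y) ht x)) (β := β) hα η hη
    refine ⟨δ, hδ, fun s hs t ht hst p q hpq => ?_⟩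
    have hs0 : 0 < s := hα.trans_le hs.1
    have ht0 : 0 < t := hα.trans_le ht.1
    have hI : Integrable (fun x => ν x * P s x y - ν x * P t x y) := (hfi s hs0).sub (hfi t ht0)
    have e : mass ν (fun t x => P t x y) s p q - mass ν (fun t x => P t x y) t p q =
        ∫ x in p..q, (ν x * P s x y - ν x * P t x y) :=
      (intervalIntegral.integral_sub (hfi s hs0).intervalIntegrable
        (hfi t ht0).intervalIntegrable).symm
    rw [e]
    calc |∫ x in p..q, (ν x * P s x y - ν x * P t x y)|
        ≤ ∫ x in p..q, |ν x * P s x y - ν x * P t x y| :=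
          intervalIntegral.abs_integral_le_integral_abs hpq
      _ = ∫ x in Ioc p q, |ν x * P s x y - ν x * P t x y| :=
          intervalIntegral.integral_of_le hpq
      _ ≤ ∫ x, |ν x * P s x y - ν x * P t x y| :=
          setIntegral_le_integral hI.abs (Eventually.of_forall fun x => abs_nonneg _)
      _ ≤ η := (hδ' s hs t ht hst).le
  have hjc := joint_cont hν ha hν0 ha0 hW (by positivity : 0 < (1 / μ) ^ 3) hAl (hsol y) hM
  have hd : 0 < Real.sqrt t := Real.sqrt_pos.2 ht
  have hsq : Real.sqrt t ^ 2 = t := Real.sq_sqrt ht.le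
  have hZ := corrector_reduction hμ hr hν hνE haE hW hT (x := x) (y := y) hd (by rw [hsq]; exact h)
  have := step_two hν ha hI0 (fun x => (hνE x).1) hν0 ha0 hW (by positivity : 0 < μ ^ 3)
    (by positivity : 0 < (1 / μ) ^ 3) hAl hAu (hsol y) hjc (hpos y) hfi (hweak y) hd hr'p
    hL0 hα0 (by rw [hr']; exact hZ)
  rw [hsq] at this
  refine le_trans (le_of_eq ?_) this
  field_simp
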